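/- There exists a constant C > 0, depending only on ψ, such that for every dyadic interval K ⊆ [0,1), Σ_{(I,J)} |∫_{Q̃_K} G_I(x+iy) \overline{G_J(x+iy)} (1-e^{-4πy}) e^{-2πy} dx dy| ≤ C |K|, where the (absolutely convergent) sum runs over all ordered pairs (I,J) of dyadic intervals contained in [0,1) EXCEPT those pairs with I = J and I ⊆ K. -/

import Mathlib

open MeasureTheory Complex Real
open scoped FourierTransform

noncomputable section

/-- The length `|I| = 2^{-j}` of a dyadic interval of generation `j`. -/
def len (j : ℤ) : ℝ := (2 : ℝ) ^ (-j)

/-- The center `C_I = 2^{-j}(k + 1/2)` of the dyadic interval `I = [2^{-j}k, 2^{-j}(k+1))`. -/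
def ctr (j k : ℤ) : ℝ := (2 : ℝ) ^ (-j) * ((k : ℝ) + 1 / 2)

/-- `ψ_I(x) = |I|^{-1/2} ψ((x - C_I)/|I|)`. -/
def psiI (ψ : SchwartzMap ℝ ℂ) (j k : ℤ) (x : ℝ) : ℂ :=
  (((Real.sqrt (len j))⁻¹ : ℝ) : ℂ) * ψ ((x - ctr j k) / len j)

/-- The Poisson extension to the upper half-plane of `f_I = |I|^{1/2} D ψ_I`, where `D` is the
Fourier multiplier with symbol `4π|ξ|`:
`F_I(x+iy) = ∫ 4π|ξ| |I|^{1/2} ψ̂_I(ξ) e^{-2π|ξ|y} e^{2πixξ} dξ`. -/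
def FI (ψ : SchwartzMap ℝ ℂ) (j k : ℤ) (x y : ℝ) : ℂ :=
  ∫ ξ : ℝ, ((4 * π * |ξ| * Real.sqrt (len j) * Real.exp (-(2 * π * |ξ| * y)) : ℝ) : ℂ) *
    𝓕 (psiI ψ j k) ξ * Complex.exp (2 * (π : ℂ) * Complex.I * (x : ℂ) * (ξ : ℂ))

/-- The periodization `G_I(x+iy) = Σ_{k∈ℤ} F_I(x-k+iy)`. -/
def GI (ψ : SchwartzMap ℝ ℂ) (j k : ℤ) (x y : ℝ) : ℂ :=
  ∑' m : ℤ, FI ψ j k (x - (m : ℝ)) y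


/-- The dyadic interval `[2^{-j}k, 2^{-j}(k+1))` as a subset of `ℝ` (indices in `ℕ`, so that
with `k < 2^j` these are exactly the dyadic subintervals of `[0,1)`). -/
def dySet (j k : ℕ) : Set ℝ := Set.Ico ((k : ℝ) * len (j : ℤ)) (((k : ℝ) + 1) * len (j : ℤ))

/-- The vertical extent of `Q̃_K` for `K` of length `2^{-j}`: `(0, -log(1-|K|)/(2π))`,
interpreted as `(0, ∞)` when `|K| = 1`. -/
def ySet (j : ℕ) : Set ℝ :=
  if j = 0 then Set.Ioi 0 else Set.Ioo 0 (-(Real.log (1 - len (j : ℤ))) / (2 * π))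

/-- Index type: ordered pairs `(I, J)` of dyadic subintervals of `[0,1)` except those with
`I = J ⊆ K`, where `K` is the dyadic interval indexed by `(jK, kK)`. -/
def pairIdx (jK kK : ℕ) : Type :=
  {q : (ℕ × ℕ) × ℕ × ℕ // q.1.2 < 2 ^ q.1.1 ∧ q.2.2 < 2 ^ q.2.1 ∧
    ¬(q.1 = q.2 ∧ dySet q.1.1 q.1.2 ⊆ dySet jK kK)}

lemma len_pos (j : ℤ) : 0 < len j := by unfold len; positivity

lemma len_sqrt_mul (j : ℤ) : ((Real.sqrt (len j) : ℝ) : ℂ) * ((Real.sqrt (len j) : ℝ) : ℂ) = (len j : ℂ) := by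
  rw [← Complex.ofReal_mul, Real.mul_self_sqrt (len_pos j).le]

lemma fourier_psiI (ψ : SchwartzMap ℝ ℂ) (j k : ℤ) (ξ : ℝ) :
    𝓕 (psiI ψ j k) ξ = ((Real.sqrt (len j) : ℝ) : ℂ) * 𝓕 (⇑ψ) (len j * ξ) *
      Complex.exp (-(2 * (π : ℂ) * Complex.I * (ctr j k : ℂ) * (ξ : ℂ))) := by
  have hl := len_pos j
  rw [Real.fourier_real_eq_integral_exp_smul, Real.fourier_real_eq_integral_exp_smul]
  set G : ℝ → ℂ := fun u => Complex.exp (-(2 * (π : ℂ) * Complex.I * (ctr j k : ℂ) * (ξ : ℂ))) *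
    (((Real.sqrt (len j))⁻¹ : ℝ) : ℂ) * (Complex.exp (↑(-2 * π * u * (len j * ξ)) * I) • ψ u) with hG
  have h1 : ∀ v : ℝ, Complex.exp (↑(-2 * π * v * ξ) * I) • psiI ψ j k v
      = G ((v - ctr j k) / len j) := by
    intro v
    have e : Complex.exp (↑(-2 * π * v * ξ) * I) =
      Complex.exp (-(2 * (π : ℂ) * Complex.I * (ctr j k : ℂ) * (ξ : ℂ))) *
      Complex.exp (↑(-2 * π * ((v - ctr j k) / len j) * (len j * ξ)) * I) := by
      rw [← Complex.exp_add]
      congr 1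
      have : (len j : ℂ) ≠ 0 := by exact_mod_cast hl.ne'
      push_cast
      field_simp
      ring
    simp only [hG, psiI, smul_eq_mul, e]
    ring
  simp_rw [h1]
  rw [MeasureTheory.integral_sub_right_eq_self (fun v => G (v / len j)) (ctr j k),
    Measure.integral_comp_div, abs_of_pos hl]
  simp only [hG]
  rw [MeasureTheory.integral_const_mul, Complex.real_smul]
  have hs : ((Real.sqrt (len j) : ℝ) : ℂ) ≠ 0 := by
    exact_mod_cast (Real.sqrt_pos.mpr hl).ne'
  rw [← len_sqrt_mul j]
  generalize (∫ v : ℝ, Complex.exp (↑(-2 * π * v * (len j * ξ)) * I) • ψ v) = A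
  push_cast
  field_simp

/-- The model profile. -/
def Phi (ψ : SchwartzMap ℝ ℂ) (u t : ℝ) : ℂ :=
  ∫ η : ℝ, ((4 * π * |η| * Real.exp (-(2 * π * |η| * t)) : ℝ) : ℂ) *
    𝓕 (⇑ψ) η * Complex.exp (2 * (π : ℂ) * Complex.I * (u : ℂ) * (η : ℂ))

lemma FI_eq (ψ : SchwartzMap ℝ ℂ) (j k : ℤ) (x y : ℝ) :
    FI ψ j k x y = (((len j)⁻¹ : ℝ) : ℂ) * Phi ψ ((x - ctr j k) / len j) (y / len j) := by
  have hl := len_pos j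
  have hlc : (len j : ℂ) ≠ 0 := by exact_mod_cast hl.ne'
  unfold FI Phi
  set G : ℝ → ℂ := fun η => ((4 * π * |η| * Real.exp (-(2 * π * |η| * (y / len j))) : ℝ) : ℂ) *
    𝓕 (⇑ψ) η * Complex.exp (2 * (π : ℂ) * Complex.I * (((x - ctr j k) / len j : ℝ) : ℂ) * (η : ℂ)) with hG
  have h1 : ∀ ξ : ℝ, ((4 * π * |ξ| * Real.sqrt (len j) * Real.exp (-(2 * π * |ξ| * y)) : ℝ) : ℂ) *
    𝓕 (psiI ψ j k) ξ * Complex.exp (2 * (π : ℂ) * Complex.I * (x : ℂ) * (ξ : ℂ)) = G (len j * ξ) := by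
    intro ξ
    rw [fourier_psiI]
    simp only [hG]
    have e1 : 2 * π * |len j * ξ| * (y / len j) = 2 * π * |ξ| * y := by
      rw [abs_mul, abs_of_pos hl]; field_simp
    have e2 : Complex.exp (2 * (π : ℂ) * Complex.I * (((x - ctr j k) / len j : ℝ) : ℂ) * ((len j * ξ : ℝ) : ℂ))
      = Complex.exp (-(2 * (π : ℂ) * Complex.I * (ctr j k : ℂ) * (ξ : ℂ))) *
        Complex.exp (2 * (π : ℂ) * Complex.I * (x : ℂ) * (ξ : ℂ)) := by
      rw [← Complex.exp_add]
      congr 1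
      push_cast
      field_simp
      ring
    rw [e1, e2, abs_mul, abs_of_pos hl]
    push_cast
    rw [← len_sqrt_mul j]
    ring
  simp_rw [h1]
  rw [Measure.integral_comp_mul_left, abs_of_pos (inv_pos.mpr hl), Complex.real_smul]

/-- The frequency support set. -/
def Sset : Set ℝ := Set.Icc (-(4 / 3) : ℝ) (-(1 / 3)) ∪ Set.Icc (1 / 3) (4 / 3)

lemma Sset_closed : IsClosed Sset := isClosed_Icc.union isClosed_Icc

lemma norm_exp_le (z : ℂ) (hz : 0 ≤ z.im) (η : ℝ) (hη : 0 ≤ η) :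
    ‖Complex.exp (2 * (π : ℂ) * Complex.I * z * (η : ℂ))‖ ≤ 1 := by
  rw [Complex.norm_exp]
  have : (2 * (π : ℂ) * Complex.I * z * (η : ℂ)).re = -(2 * π * z.im * η) := by
    simp
  rw [this]
  apply Real.exp_le_one_iff.mpr
  have := Real.pi_pos
  have : 0 ≤ 2 * π * z.im * η := by positivity
  linarith

lemma decay_aux (n : ℕ) : ∀ h : ℝ → ℂ, ContDiff ℝ (⊤ : ℕ∞) h → Function.support h ⊆ Sset →
    ∃ C : ℝ, ∀ z : ℂ, 0 ≤ z.im →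
      ‖z‖ ^ n * ‖∫ η in (0:ℝ)..2, h η * Complex.exp (2 * (π : ℂ) * Complex.I * z * (η : ℂ))‖ ≤ C := by
  induction n with
  | zero =>
    intro h hh hs
    refine ⟨∫ η in (0:ℝ)..2, ‖h η‖, fun z hz => ?_⟩
    simp only [pow_zero, one_mul]
    apply intervalIntegral.norm_integral_le_of_norm_le (by norm_num)
    · filter_upwards with η hη
      rw [norm_mul]
      have := norm_exp_le z hz η hη.1.le
      nlinarith [norm_nonneg (h η)]
    · exact (hh.continuous.norm).intervalIntegrable _ _
  | succ n ih =>
    intro h hh hs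
    have hd : ContDiff ℝ (⊤ : ℕ∞) (deriv h) := by
      exact ((contDiff_infty_iff_deriv (𝕜 := ℝ)).mp hh).2
    have hds : Function.support (deriv h) ⊆ Sset :=
      support_deriv_subset.trans (closure_minimal hs Sset_closed)
    obtain ⟨C, hC⟩ := ih (deriv h) hd hds
    refine ⟨C, fun z hz => ?_⟩
    have h0 : h 0 = 0 := by
      by_contra hne
      have := hs hne
      simp only [Sset, Set.mem_union, Set.mem_Icc] at this
      rcases this with ⟨_, h2⟩ | ⟨h1, _⟩ <;> linarith
    have h2 : h 2 = 0 := by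
      by_contra hne
      have := hs hne
      simp only [Sset, Set.mem_union, Set.mem_Icc] at this
      rcases this with ⟨_, h2⟩ | ⟨_, h1⟩ <;> linarith
    have key := intervalIntegral.integral_mul_deriv_eq_deriv_mul (a := 0) (b := 2)
      (u := h) (u' := deriv h) (v := fun η : ℝ => Complex.exp (2 * (π : ℂ) * Complex.I * z * (η : ℂ)))
      (v' := fun η : ℝ => Complex.exp (2 * (π : ℂ) * Complex.I * z * (η : ℂ)) * (2 * (π : ℂ) * Complex.I * z))
      (fun x _ => (hh.differentiable (by simp) x).hasDerivAt)
      (fun x _ => by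
        have : HasDerivAt (fun η : ℝ => 2 * (π : ℂ) * Complex.I * z * (η : ℂ)) (2 * (π : ℂ) * Complex.I * z) x := by
          simpa using (Complex.ofRealCLM.hasDerivAt (x := x)).const_mul (2 * (π : ℂ) * Complex.I * z)
        exact this.cexp)
      (hd.continuous.intervalIntegrable _ _)
      ((by fun_prop : Continuous fun η : ℝ => Complex.exp (2 * (π : ℂ) * Complex.I * z * (η : ℂ)) * (2 * (π : ℂ) * Complex.I * z)).intervalIntegrable _ _)
    rw [h0, h2] at key
    simp only [zero_mul, sub_zero, zero_sub] at key
    have e : (∫ η in (0:ℝ)..2, h η * (Complex.exp (2 * (π : ℂ) * Complex.I * z * (η : ℂ)) * (2 * (π : ℂ) * Complex.I * z)))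
      = (2 * (π : ℂ) * Complex.I * z) * ∫ η in (0:ℝ)..2, h η * Complex.exp (2 * (π : ℂ) * Complex.I * z * (η : ℂ)) := by
      rw [← intervalIntegral.integral_const_mul]
      congr 1; ext η; ring
    rw [e] at key
    have kn := congrArg norm key
    rw [norm_neg, norm_mul] at kn
    have hz2 : ‖2 * (π : ℂ) * Complex.I * z‖ = 2 * π * ‖z‖ := by
      simp [abs_of_pos Real.pi_pos]
    rw [hz2] at kn
    have := hC z hz
    rw [← kn] at this
    have pi3 := Real.pi_gt_three
    have hnn : 0 ≤ ‖z‖ ^ (n+1) * ‖∫ η in (0:ℝ)..2, h η * Complex.exp (2 * (π : ℂ) * Complex.I * z * (η : ℂ))‖ := by positivity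
    calc _ ≤ 2 * π * (‖z‖ ^ (n+1) * ‖∫ η in (0:ℝ)..2, h η * Complex.exp (2 * (π : ℂ) * Complex.I * z * (η : ℂ))‖) := by
            nlinarith
      _ = _ := by ring
      _ ≤ C := this

lemma decay_half (h : ℝ → ℂ) (hh : ContDiff ℝ (⊤ : ℕ∞) h) (hs : Function.support h ⊆ Sset) :
    ∃ C : ℝ, 0 ≤ C ∧ ∀ z : ℂ, 0 ≤ z.im →
      (1 + |z.re| + z.im) ^ 4 * ‖∫ η in (0:ℝ)..2, h η * Complex.exp (2 * (π : ℂ) * Complex.I * z * (η : ℂ))‖ ≤ C := by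
  obtain ⟨C0, h0⟩ := decay_aux 0 h hh hs
  obtain ⟨C4, h4⟩ := decay_aux 4 h hh hs
  have : ∀ z : ℂ, 0 ≤ z.im →
      (1 + |z.re| + z.im) ^ 4 * ‖∫ η in (0:ℝ)..2, h η * Complex.exp (2 * (π : ℂ) * Complex.I * z * (η : ℂ))‖ ≤ 27 * C0 + 27 * 16 * C4 := by
    intro z hz
    have a := h0 z hz
    have b := h4 z hz
    simp only [pow_zero, one_mul] at a
    set M := ‖∫ η in (0:ℝ)..2, h η * Complex.exp (2 * (π : ℂ) * Complex.I * z * (η : ℂ))‖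
    have hM : 0 ≤ M := norm_nonneg _
    have hr := Complex.abs_re_le_norm z
    have hi := (le_abs_self _).trans (Complex.abs_im_le_norm z)
    have : 1 + |z.re| + z.im ≤ 1 + 2 * ‖z‖ := by linarith
    have h1 : (1 + |z.re| + z.im) ^ 4 ≤ (1 + 2 * ‖z‖) ^ 4 := by
      apply pow_le_pow_left₀ _ this
      have := abs_nonneg z.re
      linarith
    have h2 : (1 + 2 * ‖z‖) ^ 4 ≤ 27 + 27 * 16 * ‖z‖ ^ 4 := by
      have hz0 := norm_nonneg z
      nlinarith [sq_nonneg (1 - 2 * ‖z‖), sq_nonneg (1 - 4 * ‖z‖^2), sq_nonneg (1 + 2 * ‖z‖), sq_nonneg ((1 + 2 * ‖z‖)^2)]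
    calc _ ≤ (27 + 27 * 16 * ‖z‖ ^ 4) * M := by
            apply mul_le_mul_of_nonneg_right (h1.trans h2) hM
      _ = 27 * M + 27 * 16 * (‖z‖^4 * M) := by ring
      _ ≤ _ := by linarith
  refine ⟨27 * C0 + 27 * 16 * C4, ?_, this⟩
  have := this 0 (by simp)
  refine le_trans ?_ this
  positivity

lemma Phi_bound (ψ : SchwartzMap ℝ ℂ) (hsupp : Function.support (𝓕 ⇑ψ) ⊆ Sset) :
    ∃ C : ℝ, 0 < C ∧ ∀ u t : ℝ, 0 ≤ t → ‖Phi ψ u t‖ ≤ C / (1 + |u| + t) ^ 4 := by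
  have hsm : ContDiff ℝ (⊤ : ℕ∞) (𝓕 ⇑ψ) := by
    rw [← SchwartzMap.fourier_coe]; exact (𝓕 ψ).smooth ⊤
  set hp : ℝ → ℂ := fun η => 4 * π * η * 𝓕 (⇑ψ) η with hhp
  set hm : ℝ → ℂ := fun η => 4 * π * η * 𝓕 (⇑ψ) (-η) with hhm
  have lin : ContDiff ℝ (⊤ : ℕ∞) (fun η : ℝ => 4 * (π : ℂ) * (η : ℂ)) :=
    contDiff_const.mul Complex.ofRealCLM.contDiff
  have hps : ContDiff ℝ (⊤ : ℕ∞) hp := lin.mul hsm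
  have hms : ContDiff ℝ (⊤ : ℕ∞) hm := lin.mul (hsm.comp contDiff_neg)
  have hpS : Function.support hp ⊆ Sset := by
    intro x hx
    apply hsupp
    intro h0
    exact hx (by simp [hhp, h0])
  have hmS : Function.support hm ⊆ Sset := by
    intro x hx
    have : -x ∈ Sset := by
      apply hsupp
      intro h0
      exact hx (by simp [hhm, h0])
    simp only [Sset, Set.mem_union, Set.mem_Icc] at this ⊢
    rcases this with ⟨h1, h2⟩ | ⟨h1, h2⟩
    · right; constructor <;> linarith
    · left; constructor <;> linarith
  obtain ⟨Cp, hCp, bp⟩ := decay_half hp hps hpS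
  obtain ⟨Cm, hCm, bm⟩ := decay_half hm hms hmS
  refine ⟨Cp + Cm + 1, by positivity, fun u t ht => ?_⟩
  have hpos : 0 < (1 + |u| + t) ^ 4 := by have := abs_nonneg u; positivity
  set g : ℝ → ℂ := fun η => ((4 * π * |η| * Real.exp (-(2 * π * |η| * t)) : ℝ) : ℂ) *
    𝓕 (⇑ψ) η * Complex.exp (2 * (π : ℂ) * Complex.I * (u : ℂ) * (η : ℂ)) with hg
  have hgc : Continuous g := by
    have := hsm.continuous
    fun_prop
  have hgs : Function.support g ⊆ Set.Ioc (-2) 2 := by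
    intro x hx
    have : x ∈ Sset := by
      apply hsupp
      intro h0
      exact hx (by simp [hg, h0])
    simp only [Sset, Set.mem_union, Set.mem_Icc, Set.mem_Ioc] at this ⊢
    rcases this with ⟨h1, h2⟩ | ⟨h1, h2⟩ <;> constructor <;> linarith
  have e1 : Phi ψ u t = ∫ η in (-2:ℝ)..2, g η := by
    rw [intervalIntegral.integral_eq_integral_of_support_subset hgs]
    rfl
  have e2 : (∫ η in (-2:ℝ)..2, g η) = (∫ η in (-2:ℝ)..0, g η) + ∫ η in (0:ℝ)..2, g η :=
    (intervalIntegral.integral_add_adjacent_intervals (hgc.intervalIntegrable _ _) (hgc.intervalIntegrable _ _)).symm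
  have e3 : (∫ η in (0:ℝ)..2, g η) = ∫ η in (0:ℝ)..2, hp η * Complex.exp (2 * (π : ℂ) * Complex.I * (⟨u, t⟩ : ℂ) * (η : ℂ)) := by
    apply intervalIntegral.integral_congr
    intro η hη
    rw [Set.uIcc_of_le (by norm_num)] at hη
    have hz : (⟨u, t⟩ : ℂ) = u + t * I := Complex.mk_eq_add_mul_I u t
    have : Complex.exp (2 * (π : ℂ) * Complex.I * (⟨u, t⟩ : ℂ) * (η : ℂ)) =
        Complex.exp (-(2 * π * η * t)) * Complex.exp (2 * (π : ℂ) * Complex.I * (u : ℂ) * (η : ℂ)) := by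
      rw [← Complex.exp_add, hz]
      congr 1
      linear_combination (2 * π * t * η) * Complex.I_sq
    simp only [hg, hhp, this, abs_of_nonneg hη.1]
    push_cast
    ring
  have e4 : (∫ η in (-2:ℝ)..0, g η) = ∫ η in (0:ℝ)..2, hm η * Complex.exp (2 * (π : ℂ) * Complex.I * (⟨-u, t⟩ : ℂ) * (η : ℂ)) := by
    have : (∫ η in (-2:ℝ)..0, g η) = ∫ η in (0:ℝ)..2, g (-η) := by
      rw [intervalIntegral.integral_comp_neg]; simp
    rw [this]
    apply intervalIntegral.integral_congr
    intro η hη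
    rw [Set.uIcc_of_le (by norm_num)] at hη
    have hz : (⟨-u, t⟩ : ℂ) = -u + t * I := by
      rw [Complex.mk_eq_add_mul_I]; simp
    have : Complex.exp (2 * (π : ℂ) * Complex.I * (⟨-u, t⟩ : ℂ) * (η : ℂ)) =
        Complex.exp (-(2 * π * η * t)) * Complex.exp (2 * (π : ℂ) * Complex.I * (u : ℂ) * ((-η : ℝ) : ℂ)) := by
      rw [← Complex.exp_add, hz]
      congr 1
      push_cast
      linear_combination (2 * π * t * η) * Complex.I_sq
    simp only [hg, hhm, this, abs_neg, abs_of_nonneg hη.1]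
    push_cast
    ring
  rw [e1, e2, e3, e4, le_div_iff₀ hpos]
  have b1 := bp ⟨u, t⟩ ht
  have b2 := bm ⟨-u, t⟩ ht
  simp only [abs_neg] at b1 b2
  have := norm_add_le (∫ η in (0:ℝ)..2, hm η * Complex.exp (2 * (π : ℂ) * Complex.I * (⟨-u, t⟩ : ℂ) * (η : ℂ)))
    (∫ η in (0:ℝ)..2, hp η * Complex.exp (2 * (π : ℂ) * Complex.I * (⟨u, t⟩ : ℂ) * (η : ℂ)))
  nlinarith

lemma FI_bound (ψ : SchwartzMap ℝ ℂ) (hsupp : Function.support (𝓕 ⇑ψ) ⊆ Sset) :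
    ∃ C : ℝ, 0 < C ∧ ∀ j k : ℤ, ∀ x y : ℝ, 0 ≤ y →
      ‖FI ψ j k x y‖ ≤ C * len j ^ 3 / (len j + |x - ctr j k| + y) ^ 4 := by
  obtain ⟨C, hC, h⟩ := Phi_bound ψ hsupp
  refine ⟨C, hC, fun j k x y hy => ?_⟩
  have hl := len_pos j
  rw [FI_eq, norm_mul, Complex.norm_real, Real.norm_of_nonneg (inv_pos.mpr hl).le]
  have := h ((x - ctr j k) / len j) (y / len j) (by positivity)
  calc _ ≤ (len j)⁻¹ * (C / (1 + |(x - ctr j k) / len j| + y / len j) ^ 4) := by gcongr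
    _ = _ := by
      rw [abs_div, abs_of_pos hl]
      have : 1 + |x - ctr j k| / len j + y / len j = (len j + |x - ctr j k| + y) / len j := by
        field_simp
      rw [this]
      field_simp

lemma integrable_kern (l c : ℝ) (hl : 0 < l) : Integrable (fun x : ℝ => ((l + |x - c|) ^ 2)⁻¹) := by
  have h1 : Integrable (fun x : ℝ => (l ^ 2)⁻¹ * (1 + ((x - c) / l) ^ 2)⁻¹) := by
    apply Integrable.const_mul
    exact (integrable_inv_one_add_sq.comp_div hl.ne').comp_sub_right c
  apply h1.mono'
  · apply Continuous.aestronglyMeasurable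
    apply Continuous.inv₀ (by fun_prop)
    intro x
    have := abs_nonneg (x - c)
    positivity
  · filter_upwards with x
    have h0 := abs_nonneg (x - c)
    rw [Real.norm_of_nonneg (by positivity), ← mul_inv]
    apply inv_anti₀ (by positivity)
    have : l ^ 2 * (1 + ((x - c) / l) ^ 2) = l ^ 2 + |x - c| ^ 2 := by
      rw [sq_abs]; field_simp
    rw [this]
    nlinarith

lemma plancherel (g1 g2 : ℝ → ℂ) (c1 : Continuous g1) (i1 : Integrable g1) (i2 : Integrable g2)
    (j1 : Integrable (𝓕⁻ g1)) :
    ∫ x, (𝓕⁻ g1) x * (starRingEnd ℂ) ((𝓕⁻ g2) x) = ∫ ξ, g1 ξ * (starRingEnd ℂ) (g2 ξ) := by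
  have hconj : ∀ x, (starRingEnd ℂ) ((𝓕⁻ g2) x) = 𝓕 (fun ξ => (starRingEnd ℂ) (g2 ξ)) x := by
    intro x
    rw [Real.fourierInv_eq', Real.fourier_eq', ← integral_conj]
    congr 1; ext v
    simp only [smul_eq_mul, map_mul, ← Complex.exp_conj, Complex.conj_ofReal, Complex.conj_I]
    congr 2
    push_cast
    ring
  have i2' : Integrable (fun ξ => (starRingEnd ℂ) (g2 ξ)) := by
    simpa using (Complex.conjCLE.toContinuousLinearMap.integrable_comp i2)
  have hF : Integrable (𝓕 g1) := by
    have : 𝓕 g1 = fun x => (𝓕⁻ g1) (-x) := by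
      ext x; rw [fourierInv_eq_fourier_neg]; simp
    rw [this]
    exact j1.comp_neg
  have inv : 𝓕 (𝓕⁻ g1) = g1 := c1.fourier_fourierInv_eq i1 hF
  have key := VectorFourier.integral_fourierIntegral_smul_eq_flip (L := innerₗ ℝ) (μ := volume) (ν := volume)
    (e := Real.fourierChar) Real.continuous_fourierChar continuous_inner i2' j1
  rw [flip_innerₗ] at key
  have k1 : ∀ x, VectorFourier.fourierIntegral Real.fourierChar volume (innerₗ ℝ) (fun ξ => (starRingEnd ℂ) (g2 ξ)) x
    = 𝓕 (fun ξ => (starRingEnd ℂ) (g2 ξ)) x := fun x => rfl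
  have k2 : ∀ x, VectorFourier.fourierIntegral Real.fourierChar volume (innerₗ ℝ) (𝓕⁻ g1) x
    = 𝓕 (𝓕⁻ g1) x := fun x => rfl
  simp only [k1, k2, inv, smul_eq_mul] at key
  simp_rw [hconj]
  calc _ = _ := by congr 1; ext x; rw [mul_comm]
    _ = _ := key
    _ = _ := by congr 1; ext x; rw [mul_comm]

lemma psiI_cont (ψ : SchwartzMap ℝ ℂ) (j k : ℤ) : Continuous (psiI ψ j k) := by
  unfold psiI
  have := ψ.continuous
  fun_prop

lemma psiI_integrable (ψ : SchwartzMap ℝ ℂ) (j k : ℤ) : Integrable (psiI ψ j k) := by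
  unfold psiI
  apply Integrable.const_mul
  exact (ψ.integrable.comp_div (len_pos j).ne').comp_sub_right (ctr j k)

lemma fpsi_cont (ψ : SchwartzMap ℝ ℂ) (j k : ℤ) : Continuous (𝓕 (psiI ψ j k)) := by
  have e : 𝓕 (psiI ψ j k) = fun ξ => ((Real.sqrt (len j) : ℝ) : ℂ) * 𝓕 (⇑ψ) (len j * ξ) *
      Complex.exp (-(2 * (π : ℂ) * Complex.I * (ctr j k : ℂ) * (ξ : ℂ))) := by
    ext ξ; exact fourier_psiI ψ j k ξ
  have : Continuous (𝓕 ⇑ψ) := by rw [← SchwartzMap.fourier_coe]; exact (𝓕 ψ).continuous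
  rw [e]
  fun_prop

lemma fpsi_supp (ψ : SchwartzMap ℝ ℂ) (hsupp : Function.support (𝓕 ⇑ψ) ⊆ Sset) (j k : ℤ) (ξ : ℝ)
    (h : 𝓕 (psiI ψ j k) ξ ≠ 0) : 1 / 3 / len j ≤ |ξ| ∧ |ξ| ≤ 4 / 3 / len j := by
  have hl := len_pos j
  have hm : len j * ξ ∈ Sset := by
    apply hsupp
    intro h0
    apply h
    rw [fourier_psiI, h0]; simp
  have : 1 / 3 ≤ |len j * ξ| ∧ |len j * ξ| ≤ 4 / 3 := by
    simp only [Sset, Set.mem_union, Set.mem_Icc] at hm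
    rcases hm with ⟨h1, h2⟩ | ⟨h1, h2⟩
    · rw [abs_of_neg (by linarith)]; constructor <;> linarith
    · rw [abs_of_pos (by linarith)]; constructor <;> linarith
  rw [abs_mul, abs_of_pos hl] at this
  rw [div_le_iff₀ hl, le_div_iff₀ hl, mul_comm |ξ|]
  exact this

lemma fpsi_compact (ψ : SchwartzMap ℝ ℂ) (hsupp : Function.support (𝓕 ⇑ψ) ⊆ Sset) (j k : ℤ) :
    HasCompactSupport (𝓕 (psiI ψ j k)) := by
  apply HasCompactSupport.of_support_subset_isCompact (isCompact_Icc (a := -(4 / 3 / len j)) (b := 4 / 3 / len j))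
  intro ξ hξ
  exact abs_le.mp (fpsi_supp ψ hsupp j k ξ hξ).2

lemma fpsi_integrable (ψ : SchwartzMap ℝ ℂ) (hsupp : Function.support (𝓕 ⇑ψ) ⊆ Sset) (j k : ℤ) :
    Integrable (𝓕 (psiI ψ j k)) :=
  (fpsi_cont ψ j k).integrable_of_hasCompactSupport (fpsi_compact ψ hsupp j k)

/-- Fourier side of the Poisson extension. -/
def gI (ψ : SchwartzMap ℝ ℂ) (j k : ℤ) (y ξ : ℝ) : ℂ :=
  ((4 * π * |ξ| * Real.sqrt (len j) * Real.exp (-(2 * π * |ξ| * y)) : ℝ) : ℂ) *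
    𝓕 (psiI ψ j k) ξ

lemma gI_cont (ψ : SchwartzMap ℝ ℂ) (j k : ℤ) : Continuous (fun p : ℝ × ℝ => gI ψ j k p.1 p.2) := by
  have := fpsi_cont ψ j k
  unfold gI
  fun_prop

lemma gI_integrable (ψ : SchwartzMap ℝ ℂ) (hsupp : Function.support (𝓕 ⇑ψ) ⊆ Sset) (j k : ℤ) (y : ℝ) :
    Integrable (gI ψ j k y) := by
  apply Continuous.integrable_of_hasCompactSupport
  · exact (gI_cont ψ j k).comp (by fun_prop : Continuous fun ξ : ℝ => (y, ξ))
  · exact (fpsi_compact ψ hsupp j k).mul_left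

lemma FI_eq_inv (ψ : SchwartzMap ℝ ℂ) (j k : ℤ) (x y : ℝ) : FI ψ j k x y = (𝓕⁻ (gI ψ j k y)) x := by
  rw [Real.fourierInv_eq']
  unfold FI gI
  congr 1; ext ξ
  rw [smul_eq_mul, mul_comm]
  congr 2
  simp
  ring

lemma FI_meas (ψ : SchwartzMap ℝ ℂ) (j k : ℤ) :
    StronglyMeasurable (fun p : ℝ × ℝ => FI ψ j k p.1 p.2) := by
  unfold FI
  apply StronglyMeasurable.integral_prod_right (f := fun (p : ℝ × ℝ) (ξ : ℝ) =>
    ((4 * π * |ξ| * Real.sqrt (len j) * Real.exp (-(2 * π * |ξ| * p.2)) : ℝ) : ℂ) *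
    𝓕 (psiI ψ j k) ξ * Complex.exp (2 * (π : ℂ) * Complex.I * (p.1 : ℂ) * (ξ : ℂ)))
  apply Continuous.stronglyMeasurable
  have := fpsi_cont ψ j k
  unfold Function.uncurry
  fun_prop

lemma FI_bound_prod {C : ℝ} (hC : 0 < C) (j k : ℤ) (x y : ℝ) (hy : 0 ≤ y) :
    C * len j ^ 3 / (len j + |x - ctr j k| + y) ^ 4 ≤
      C * len j ^ 3 * (((len j + |x - ctr j k|) ^ 2)⁻¹ * ((len j + |y - 0|) ^ 2)⁻¹) := by
  have hl := len_pos j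
  have h0 := abs_nonneg (x - ctr j k)
  rw [sub_zero, abs_of_nonneg hy, ← mul_inv, div_eq_mul_inv]
  gcongr
  calc (len j + |x - ctr j k|) ^ 2 * (len j + y) ^ 2 ≤
      (len j + |x - ctr j k| + y) ^ 2 * (len j + |x - ctr j k| + y) ^ 2 := by
        have e1 : len j + |x - ctr j k| ≤ len j + |x - ctr j k| + y := by linarith
        have e2 : len j + y ≤ len j + |x - ctr j k| + y := by linarith
        exact mul_le_mul (pow_le_pow_left₀ (by positivity) e1 2) (pow_le_pow_left₀ (by positivity) e2 2)
          (by positivity) (by positivity)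
    _ = _ := by ring

lemma FI_bound_y {C : ℝ} (hC : 0 < C) (j k : ℤ) (x y : ℝ) (hy : 0 ≤ y) :
    C * len j ^ 3 / (len j + |x - ctr j k| + y) ^ 4 * y ≤ C := by
  have hl := len_pos j
  have h0 := abs_nonneg (x - ctr j k)
  rw [div_mul_eq_mul_div, div_le_iff₀ (by positivity)]
  calc C * len j ^ 3 * y ≤ C * (len j + |x - ctr j k| + y) ^ 3 * (len j + |x - ctr j k| + y) := by
        gcongr <;> linarith
    _ = _ := by ring

lemma FI_integrable_x (ψ : SchwartzMap ℝ ℂ) (hsupp : Function.support (𝓕 ⇑ψ) ⊆ Sset) (j k : ℤ) (y : ℝ)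
    (hy : 0 ≤ y) : Integrable (fun x => FI ψ j k x y) := by
  obtain ⟨C, hC, h⟩ := FI_bound ψ hsupp
  apply ((((integrable_kern (len j) (ctr j k) (len_pos j)).mul_const (((len j + |y - 0|) ^ 2)⁻¹))).const_mul (C * len j ^ 3)).mono'
  · exact ((FI_meas ψ j k).comp_measurable (by fun_prop : Measurable fun x : ℝ => (x, y))).aestronglyMeasurable
  · filter_upwards with x
    exact (h j k x y hy).trans (FI_bound_prod hC j k x y hy)

lemma FF_integrable (ψ : SchwartzMap ℝ ℂ) (hsupp : Function.support (𝓕 ⇑ψ) ⊆ Sset) (j k j' k' : ℤ) :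
    Integrable (fun p : ℝ × ℝ => FI ψ j k p.1 p.2 * (starRingEnd ℂ) (FI ψ j' k' p.1 p.2) * (p.2 : ℂ))
      (volume.prod (volume.restrict (Set.Ioi 0))) := by
  obtain ⟨C, hC, h⟩ := FI_bound ψ hsupp
  have hk := ((integrable_kern (len j) (ctr j k) (len_pos j)).mul_prod
    ((integrable_kern (len j) 0 (len_pos j)).restrict (s := Set.Ioi 0))).const_mul (C * len j ^ 3 * C)
  apply hk.mono'
  · apply StronglyMeasurable.aestronglyMeasurable
    have h1 := (FI_meas ψ j k).measurable
    have h2 := (FI_meas ψ j' k').measurable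
    apply Measurable.stronglyMeasurable
    apply Measurable.mul
    · exact h1.mul (Complex.continuous_conj.measurable.comp h2)
    · fun_prop
  · have : ∀ᵐ p : ℝ × ℝ ∂(volume.prod (volume.restrict (Set.Ioi (0:ℝ)))), 0 < p.2 := by
      apply Measure.ae_prod_mem_iff_ae_ae_mem (s := {p : ℝ × ℝ | 0 < p.2}) (measurableSet_lt measurable_const measurable_snd) |>.mpr
      filter_upwards with x
      exact ae_restrict_mem measurableSet_Ioi
    filter_upwards [this] with p hp
    rw [norm_mul, norm_mul, RCLike.norm_conj, Complex.norm_real, Real.norm_of_nonneg hp.le]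
    have a1 := (h j k p.1 p.2 hp.le).trans (FI_bound_prod hC j k p.1 p.2 hp.le)
    have a2 : ‖FI ψ j' k' p.1 p.2‖ * p.2 ≤ C :=
      (mul_le_mul_of_nonneg_right (h j' k' p.1 p.2 hp.le) hp.le).trans (FI_bound_y hC j' k' p.1 p.2 hp.le)
    rw [mul_assoc]
    calc _ ≤ C * len j ^ 3 * (((len j + |p.1 - ctr j k|) ^ 2)⁻¹ * ((len j + |p.2 - 0|) ^ 2)⁻¹) * C := by
          apply mul_le_mul a1 a2 (by positivity)
          exact (norm_nonneg _).trans a1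
      _ = _ := by ring

lemma fpsi_orth (ψ : SchwartzMap ℝ ℂ) (hsupp : Function.support (𝓕 ⇑ψ) ⊆ Sset) (j k j' k' : ℤ) :
    ∫ ξ, 𝓕 (psiI ψ j k) ξ * (starRingEnd ℂ) (𝓕 (psiI ψ j' k') ξ) =
      ∫ x : ℝ, psiI ψ j k x * (starRingEnd ℂ) (psiI ψ j' k' x) := by
  have e : ∀ j k, 𝓕⁻ (𝓕 (psiI ψ j k)) = psiI ψ j k := fun j k =>
    (psiI_cont ψ j k).fourierInv_fourier_eq (psiI_integrable ψ j k) (fpsi_integrable ψ hsupp j k)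
  have := plancherel (𝓕 (psiI ψ j k)) (𝓕 (psiI ψ j' k')) (fpsi_cont ψ j k) (fpsi_integrable ψ hsupp j k)
    (fpsi_integrable ψ hsupp j' k') (by rw [e]; exact psiI_integrable ψ j k)
  rw [← this, e, e]

lemma int_y_exp (b : ℝ) (hb : 0 < b) : ∫ y in Set.Ioi (0:ℝ), y * Real.exp (-(b * y)) = 1 / b ^ 2 := by
  have := Real.integral_rpow_mul_exp_neg_mul_Ioi (a := 2) (r := b) (by norm_num) hb
  have g2 : Real.Gamma 2 = 1 := by
    exact Real.Gamma_two
  rw [g2] at this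
  norm_num at this
  rw [this]; simp

lemma integrable_y_exp (b : ℝ) (hb : 0 < b) : IntegrableOn (fun y => y * Real.exp (-(b * y))) (Set.Ioi (0:ℝ)) := by
  by_contra h
  have h1 := int_y_exp b hb
  rw [integral_undef h] at h1
  have : 0 < 1 / b ^ 2 := by positivity
  linarith

lemma core_orth (ψ : SchwartzMap ℝ ℂ) (hsupp : Function.support (𝓕 ⇑ψ) ⊆ Sset)
    (j k j' k' : ℤ) (h0 : (∫ x : ℝ, psiI ψ j k x * (starRingEnd ℂ) (psiI ψ j' k' x)) = 0) :
    ∫ x : ℝ, ∫ y in Set.Ioi (0:ℝ), FI ψ j k x y * (starRingEnd ℂ) (FI ψ j' k' x y) * (y : ℂ) = 0 := by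
  rw [integral_integral_swap (FF_integrable ψ hsupp j k j' k')]
  set A : ℝ := 16 * π ^ 2 * (Real.sqrt (len j) * Real.sqrt (len j')) with hA
  set w : ℝ → ℂ := fun ξ => 𝓕 (psiI ψ j k) ξ * (starRingEnd ℂ) (𝓕 (psiI ψ j' k') ξ) with hw
  have hwc : Continuous w := (fpsi_cont ψ j k).mul (Complex.continuous_conj.comp (fpsi_cont ψ j' k'))
  have hwcs : HasCompactSupport w := (fpsi_compact ψ hsupp j k).mul_right
  have hA' : ∀ ξ y : ℝ, gI ψ j k y ξ * (starRingEnd ℂ) (gI ψ j' k' y ξ) * (y : ℂ) =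
      ((A * ξ ^ 2 * (y * Real.exp (-(4 * π * |ξ| * y))) : ℝ) : ℂ) * w ξ := by
    intro ξ y
    simp only [gI, hw, map_mul, Complex.conj_ofReal]
    have : Real.exp (-(4 * π * |ξ| * y)) = Real.exp (-(2 * π * |ξ| * y)) * Real.exp (-(2 * π * |ξ| * y)) := by
      rw [← Real.exp_add]; ring_nf
    rw [this, ← sq_abs ξ, hA]
    push_cast
    ring
  have e1 : ∀ y ∈ Set.Ioi (0:ℝ), (∫ x : ℝ, FI ψ j k x y * (starRingEnd ℂ) (FI ψ j' k' x y) * (y : ℂ)) =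
      ∫ ξ : ℝ, ((A * ξ ^ 2 * (y * Real.exp (-(4 * π * |ξ| * y))) : ℝ) : ℂ) * w ξ := by
    intro y hy
    simp_rw [← hA']
    rw [integral_mul_const, integral_mul_const]
    congr 1
    simp_rw [FI_eq_inv]
    apply plancherel _ _ _ (gI_integrable ψ hsupp j k y) (gI_integrable ψ hsupp j' k' y)
    · have := FI_integrable_x ψ hsupp j k y (le_of_lt hy)
      simp_rw [FI_eq_inv] at this
      exact this
    · exact (gI_cont ψ j k).comp (by fun_prop : Continuous fun ξ : ℝ => (y, ξ))
  rw [setIntegral_congr_fun measurableSet_Ioi e1]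
  have hIntg : Integrable (Function.uncurry fun (y ξ : ℝ) => ((A * ξ ^ 2 * (y * Real.exp (-(4 * π * |ξ| * y))) : ℝ) : ℂ) * w ξ)
      ((volume.restrict (Set.Ioi (0:ℝ))).prod volume) := by
    have hl := len_pos j
    set b : ℝ := 4 * π * (1 / 3 / len j) with hb
    have hbpos : 0 < b := by have := Real.pi_pos; positivity
    have hi : Integrable (fun ξ : ℝ => ‖w ξ‖ * (A * ξ ^ 2)) := by
      apply Continuous.integrable_of_hasCompactSupport
      · fun_prop
      · exact hwcs.norm.mul_right
    apply ((integrable_y_exp b hbpos).mul_prod hi).mono'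
    · apply Continuous.aestronglyMeasurable
      unfold Function.uncurry
      fun_prop
    · have : ∀ᵐ p : ℝ × ℝ ∂((volume.restrict (Set.Ioi (0:ℝ))).prod volume), 0 < p.1 := by
        have : ∀ᵐ y : ℝ ∂(volume.restrict (Set.Ioi (0:ℝ))), 0 < y := ae_restrict_mem measurableSet_Ioi
        exact Measure.quasiMeasurePreserving_fst.ae this
      filter_upwards [this] with p hp
      unfold Function.uncurry
      have hApos : 0 ≤ A := by positivity
      rw [norm_mul, Complex.norm_real, Real.norm_of_nonneg (by positivity)]
      by_cases hz : w p.2 = 0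
      · simp [hz]
      · have hne : 𝓕 (psiI ψ j k) p.2 ≠ 0 := by
          intro h; apply hz; simp [hw, h]
        have hlow := (fpsi_supp ψ hsupp j k p.2 hne).1
        have he : Real.exp (-(4 * π * |p.2| * p.1)) ≤ Real.exp (-(b * p.1)) := by
          apply Real.exp_le_exp.mpr
          have := Real.pi_pos
          have : b ≤ 4 * π * |p.2| := by rw [hb]; gcongr
          nlinarith
        calc _ ≤ A * p.2 ^ 2 * (p.1 * Real.exp (-(b * p.1))) * ‖w p.2‖ := by gcongr
          _ = _ := by ring
  rw [integral_integral_swap hIntg]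
  have e2 : ∀ ξ : ℝ, (∫ y in Set.Ioi (0:ℝ), ((A * ξ ^ 2 * (y * Real.exp (-(4 * π * |ξ| * y))) : ℝ) : ℂ) * w ξ)
      = ((Real.sqrt (len j) * Real.sqrt (len j') : ℝ) : ℂ) * w ξ := by
    intro ξ
    by_cases hz : w ξ = 0
    · simp [hz]
    have hne : 𝓕 (psiI ψ j k) ξ ≠ 0 := by
      intro h; apply hz; simp [hw, h]
    have hlow := (fpsi_supp ψ hsupp j k ξ hne).1
    have hl := len_pos j
    have hpos : 0 < |ξ| := lt_of_lt_of_le (by positivity) hlow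
    rw [integral_mul_const, integral_complex_ofReal, integral_const_mul, int_y_exp _ (by have := Real.pi_pos; positivity)]
    congr 2
    rw [mul_pow, sq_abs, hA]
    have := Real.pi_pos
    have : ξ ≠ 0 := abs_pos.mp hpos
    field_simp
    ring
  simp_rw [e2]
  rw [integral_const_mul]
  simp only [hw]
  rw [fpsi_orth ψ hsupp, h0, mul_zero]

lemma pos_sum : ∃ M : ℝ, 0 < M ∧ ∀ (j : ℤ) (x : ℝ),
    ∑' k : ℤ, ENNReal.ofReal (len j ^ 2 / (len j + |x - ctr j k|) ^ 2) ≤ ENNReal.ofReal M := by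
  have hsum : Summable (fun n : ℤ => 4 * (1 / (1 + |(n : ℝ)|) ^ 2)) := by
    apply Summable.mul_left
    have h2 : Summable (fun n : ℕ => 1 / (1 + (n : ℝ)) ^ 2) := by
      have := (summable_nat_add_iff 1).mpr (Real.summable_one_div_nat_pow.mpr (by norm_num : 1 < 2))
      refine this.congr fun n => ?_
      push_cast; rw [add_comm]
    apply Summable.of_nat_of_neg
    · simpa using h2
    · simpa using h2
  refine ⟨∑' n : ℤ, 4 * (1 / (1 + |(n : ℝ)|) ^ 2) + 1, ?_, ?_⟩
  · have : 0 ≤ ∑' n : ℤ, 4 * (1 / (1 + |(n : ℝ)|) ^ 2) := tsum_nonneg fun n => by positivity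
    linarith
  intro j x
  have hl := len_pos j
  set v := x / len j - 1 / 2 with hv
  rw [← (Equiv.addRight ⌊v⌋).tsum_eq]
  calc _ ≤ ∑' n : ℤ, ENNReal.ofReal (4 * (1 / (1 + |(n : ℝ)|) ^ 2)) := by
        apply ENNReal.tsum_le_tsum
        intro n
        apply ENNReal.ofReal_le_ofReal
        have e : x - ctr j (n + ⌊v⌋) = len j * (v - (n + ⌊v⌋)) := by
          simp only [ctr, hv, len]
          push_cast
          have : (2:ℝ) ^ (-j) ≠ 0 := by positivity
          field_simp
          ring
        simp only [Equiv.coe_addRight]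
        rw [e, abs_mul, abs_of_pos hl]
        have : len j + len j * |v - (n + ⌊v⌋)| = len j * (1 + |v - (n + ⌊v⌋)|) := by ring
        rw [this, mul_pow, div_mul_eq_div_div, div_self (by positivity)]
        have h1 : (1 + |(n : ℝ)|) / 2 ≤ 1 + |v - (n + ⌊v⌋)| := by
          have f1 := Int.floor_le v
          have f2 := Int.lt_floor_add_one v
          have a1 : |(n : ℝ)| ≤ |v - (n + ⌊v⌋)| + |v - ⌊v⌋| := by
            have : (n : ℝ) = (v - ⌊v⌋) - (v - (n + ⌊v⌋)) := by ring
            calc |(n : ℝ)| = |(v - ⌊v⌋) - (v - (n + ⌊v⌋))| := by rw [← this]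
              _ ≤ _ := by
                have := norm_sub_le (v - ⌊v⌋) (v - (n + ⌊v⌋))
                rw [Real.norm_eq_abs, Real.norm_eq_abs, Real.norm_eq_abs] at this
                linarith
          have a2 : |v - ⌊v⌋| ≤ 1 := by rw [abs_of_nonneg] <;> linarith
          have := abs_nonneg (v - (n + ⌊v⌋))
          linarith
        calc 1 / (1 + |v - (n + ⌊v⌋)|) ^ 2 ≤ 1 / ((1 + |(n : ℝ)|) / 2) ^ 2 := by gcongr
          _ = _ := by field_simp; norm_num
    _ = ENNReal.ofReal (∑' n : ℤ, 4 * (1 / (1 + |(n : ℝ)|) ^ 2)) :=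
        (ENNReal.ofReal_tsum_of_nonneg (fun n => by positivity) hsum).symm
    _ ≤ _ := ENNReal.ofReal_le_ofReal (by linarith)

/-- Absolute majorant of `GI`. -/
def aI (ψ : SchwartzMap ℝ ℂ) (p : ℕ × ℕ) (x y : ℝ) : ENNReal :=
  ∑' m : ℤ, ‖FI ψ p.1 p.2 (x - (m : ℝ)) y‖ₑ

lemma ctr_shift (j k : ℕ) (m : ℤ) : (m : ℝ) + ctr j k = ctr j (k + 2 ^ j * m) := by
  simp only [ctr]
  push_cast
  rw [zpow_neg, zpow_natCast]
  field_simp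
  ring

lemma shift_inj (j : ℕ) {A : Set ℕ} (hA : ∀ k ∈ A, k < 2 ^ j) :
    Function.Injective (fun q : A × ℤ => ((q.1 : ℕ) : ℤ) + 2 ^ j * q.2) := by
  rintro ⟨⟨k, hk⟩, m⟩ ⟨⟨k', hk'⟩, m'⟩ h
  simp only at h
  have h1 := hA k hk
  have h2 := hA k' hk'
  have h1' : (k : ℤ) < 2 ^ j := by exact_mod_cast h1
  have h2' : (k' : ℤ) < 2 ^ j := by exact_mod_cast h2
  have e1 : ((k : ℤ) + 2 ^ j * m) % 2 ^ j = k := by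
    rw [Int.add_mul_emod_self_left]; exact Int.emod_eq_of_lt (by positivity) h1'
  have e2 : ((k' : ℤ) + 2 ^ j * m') % 2 ^ j = k' := by
    rw [Int.add_mul_emod_self_left]; exact Int.emod_eq_of_lt (by positivity) h2'
  have ek : (k : ℤ) = k' := by rw [← e1, ← e2, h]
  have em : m = m' := by
    rw [ek] at h
    have : (2:ℤ) ^ j * m = 2 ^ j * m' := by linarith
    exact mul_left_cancel₀ (by positivity) this
  have ek' : k = k' := by exact_mod_cast ek
  subst ek' em
  rfl

lemma scale_sum (ψ : SchwartzMap ℝ ℂ) (hsupp : Function.support (𝓕 ⇑ψ) ⊆ Sset) :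
    ∃ C : ℝ, 0 < C ∧ ∀ (j : ℕ) (x y R : ℝ) (A : Set ℕ), 0 ≤ y → 0 ≤ R → (∀ k ∈ A, k < 2 ^ j) →
      (∀ k ∈ A, ∀ m : ℤ, R ≤ 2 * (len j + |x - m - ctr j k| + y)) →
      ∑' k : A, aI ψ (j, k) x y ≤ ENNReal.ofReal (C * (len j / (len j + R) ^ 2)) := by
  obtain ⟨C0, hC0, hF⟩ := FI_bound ψ hsupp
  obtain ⟨M, hM, hP⟩ := pos_sum
  refine ⟨9 * C0 * M, by positivity, fun j x y R A hy hR hA hd => ?_⟩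
  have hl := len_pos j
  have e1 : ∀ k : A, ∀ m : ℤ, ‖FI ψ j (k : ℕ) (x - (m : ℝ)) y‖ₑ ≤
      ENNReal.ofReal (9 * C0 * (len j / (len j + R) ^ 2)) *
        ENNReal.ofReal (len j ^ 2 / (len j + |x - ctr j (((k : ℕ) : ℤ) + 2 ^ j * m)|) ^ 2) := by
    intro k m
    rw [← ENNReal.ofReal_mul (by positivity), ← ofReal_norm]
    apply ENNReal.ofReal_le_ofReal
    refine (hF j (k : ℕ) (x - m) y hy).trans ?_
    rw [← ctr_shift, ← sub_sub]
    have h2 := hd k k.2 m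
    have h0 := abs_nonneg (x - m - ctr j (k : ℕ))
    set D := |x - m - ctr j (k : ℕ)|
    have a1 : (len j + R) ^ 2 ≤ (3 * (len j + D + y)) ^ 2 := by
      apply pow_le_pow_left₀ (by positivity); linarith
    have a2 : (len j + D) ^ 2 ≤ (len j + D + y) ^ 2 := by
      apply pow_le_pow_left₀ (by positivity); linarith
    rw [mul_assoc, div_mul_div_comm, ← mul_div_assoc, div_le_div_iff₀ (by positivity) (by positivity)]
    calc C0 * len j ^ 3 * ((len j + R) ^ 2 * (len j + D) ^ 2) ≤
        C0 * len j ^ 3 * ((3 * (len j + D + y)) ^ 2 * (len j + D + y) ^ 2) := by gcongr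
      _ = _ := by ring
  calc ∑' k : A, aI ψ (j, k) x y ≤ ∑' k : A, ∑' m : ℤ,
        ENNReal.ofReal (9 * C0 * (len j / (len j + R) ^ 2)) *
        ENNReal.ofReal (len j ^ 2 / (len j + |x - ctr j (((k : ℕ) : ℤ) + 2 ^ j * m)|) ^ 2) := by
        apply ENNReal.tsum_le_tsum; intro k
        apply ENNReal.tsum_le_tsum; intro m
        exact e1 k m
    _ = ENNReal.ofReal (9 * C0 * (len j / (len j + R) ^ 2)) * ∑' q : A × ℤ,
        ENNReal.ofReal (len j ^ 2 / (len j + |x - ctr j (((q.1 : ℕ) : ℤ) + 2 ^ j * q.2)|) ^ 2) := by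
        simp_rw [ENNReal.tsum_mul_left]
        rw [ENNReal.tsum_prod (f := fun (k : A) (m : ℤ) => ENNReal.ofReal (len j ^ 2 / (len j + |x - ctr j (((k : ℕ) : ℤ) + 2 ^ j * m)|) ^ 2))]
    _ ≤ ENNReal.ofReal (9 * C0 * (len j / (len j + R) ^ 2)) * ENNReal.ofReal M := by
        gcongr
        refine le_trans ?_ (hP j x)
        exact ENNReal.tsum_comp_le_tsum_of_injective (shift_inj j hA)
          (fun k => ENNReal.ofReal (len j ^ 2 / (len j + |x - ctr j k|) ^ 2))
    _ = _ := by
        rw [← ENNReal.ofReal_mul (by positivity)]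
        congr 1; ring

lemma len_add (i j : ℕ) : len ((i + j : ℕ) : ℤ) = len j * (1 / 2) ^ i := by
  simp only [len, zpow_neg, zpow_natCast]
  rw [pow_add, one_div, inv_pow, mul_inv, mul_comm]

lemma geo_sum (j0 : ℕ) (R : ℝ) (hR : 0 < R) :
    ∑' i : ℕ, ENNReal.ofReal (len ((i + j0 : ℕ) : ℤ) / (len ((i + j0 : ℕ) : ℤ) + R) ^ 2) ≤
      ENNReal.ofReal (2 * (len j0 / (R * (len j0 + R)))) := by
  have hl : ∀ i : ℕ, 0 < len ((i + j0 : ℕ) : ℤ) := fun i => len_pos _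
  apply ENNReal.tsum_le_of_sum_range_le
  intro n
  rw [← ENNReal.ofReal_sum_of_nonneg (fun i _ => by have := hl i; positivity)]
  apply ENNReal.ofReal_le_ofReal
  have : ∑ i ∈ Finset.range n, len ((i + j0 : ℕ) : ℤ) / (len ((i + j0 : ℕ) : ℤ) + R) ^ 2 ≤
      2 * (len j0 / (R * (len j0 + R))) - 2 * (len ((n + j0 : ℕ) : ℤ) / (R * (len ((n + j0 : ℕ) : ℤ) + R))) := by
    induction n with
    | zero => simp
    | succ n ih =>
      rw [Finset.sum_range_succ]
      have h2 : len ((n + 1 + j0 : ℕ) : ℤ) = len ((n + j0 : ℕ) : ℤ) / 2 := by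
        rw [len_add, len_add, pow_succ]; ring
      rw [h2]
      have hp := hl n
      set l := len ((n + j0 : ℕ) : ℤ)
      have key : l / (l + R) ^ 2 ≤ 2 * (l / (R * (l + R))) - 2 * (l / 2 / (R * (l / 2 + R))) := by
        have : 2 * (l / (R * (l + R))) - 2 * (l / 2 / (R * (l / 2 + R))) = 2 * l / ((l + R) * (l + 2 * R)) := by
          field_simp; ring
        rw [this, div_le_div_iff₀ (by positivity) (by positivity)]
        have : 0 ≤ l * (l + R) * l := by positivity
        nlinarith
      linarith
  have hp := hl n
  have : 0 ≤ 2 * (len ((n + j0 : ℕ) : ℤ) / (R * (len ((n + j0 : ℕ) : ℤ) + R))) := by positivity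
  linarith

lemma tot_sum (ψ : SchwartzMap ℝ ℂ) (hsupp : Function.support (𝓕 ⇑ψ) ⊆ Sset) :
    ∃ C : ℝ, 0 < C ∧ ∀ (j0 : ℕ) (x y R : ℝ) (A : Set (ℕ × ℕ)), 0 ≤ y → 0 < R →
      (∀ p ∈ A, p.2 < 2 ^ p.1 ∧ j0 ≤ p.1 ∧
        ∀ m : ℤ, R ≤ 2 * (len p.1 + |x - m - ctr p.1 p.2| + y)) →
      ∑' p : ℕ × ℕ, A.indicator (fun p => aI ψ p x y) p ≤
        ENNReal.ofReal (C * (len j0 / (R * (len j0 + R)))) := by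
  obtain ⟨C, hC, hS⟩ := scale_sum ψ hsupp
  refine ⟨C * 2, by positivity, fun j0 x y R A hy hR hA => ?_⟩
  rw [ENNReal.tsum_prod' ]
  have e : ∀ j : ℕ, ∑' k : ℕ, A.indicator (fun p => aI ψ p x y) (j, k) =
      ∑' k : {k | (j, k) ∈ A}, aI ψ (j, (k : ℕ)) x y := by
    intro j
    rw [tsum_subtype {k | (j, k) ∈ A} (fun k => aI ψ (j, k) x y)]
    rfl
  simp_rw [e]
  have hinj : Function.Injective (fun i : ℕ => i + j0) := fun a b h => by simpa using h
  rw [← hinj.tsum_eq]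
  · calc _ ≤ ∑' i : ℕ, ENNReal.ofReal C * ENNReal.ofReal (len ((i + j0 : ℕ) : ℤ) / (len ((i + j0 : ℕ) : ℤ) + R) ^ 2) := by
          apply ENNReal.tsum_le_tsum; intro i
          rw [← ENNReal.ofReal_mul hC.le]
          apply hS (i + j0) x y R _ hy hR.le
          · intro k hk; exact (hA _ hk).1
          · intro k hk; exact (hA _ hk).2.2
      _ ≤ ENNReal.ofReal C * ENNReal.ofReal (2 * (len j0 / (R * (len j0 + R)))) := by
          rw [ENNReal.tsum_mul_left]
          gcongr
          exact geo_sum j0 R hR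
      _ = _ := by
          rw [← ENNReal.ofReal_mul hC.le, mul_assoc]
  · intro j hj
    by_contra hn
    apply hj
    rw [ENNReal.tsum_eq_zero]
    rintro ⟨k, hk⟩
    exfalso
    apply hn
    have := (hA _ hk).2.1
    exact ⟨j - j0, by simp only at this ⊢; omega⟩

lemma single_bound (ψ : SchwartzMap ℝ ℂ) (hsupp : Function.support (𝓕 ⇑ψ) ⊆ Sset) :
    ∃ C : ℝ, 0 < C ∧ ∀ (p : ℕ × ℕ) (x y : ℝ), 0 ≤ y → p.2 < 2 ^ p.1 →
      aI ψ p x y ≤ ENNReal.ofReal (C * (len p.1 / (len p.1 + y) ^ 2)) := by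
  obtain ⟨C, hC, hS⟩ := scale_sum ψ hsupp
  refine ⟨C, hC, fun p x y hy hp => ?_⟩
  have := hS p.1 x y y {p.2} hy hy (by simpa using hp) (by
    intro k _ m
    have := abs_nonneg (x - m - ctr p.1 k)
    have := len_pos p.1
    linarith)
  simpa using this

lemma GI_le (ψ : SchwartzMap ℝ ℂ) (p : ℕ × ℕ) (x y : ℝ) : ‖GI ψ p.1 p.2 x y‖ₑ ≤ aI ψ p x y :=
  enorm_tsum_le_tsum_enorm

lemma FI_shift (ψ : SchwartzMap ℝ ℂ) (p : ℕ × ℕ) (x y : ℝ) (m : ℤ) :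
    FI ψ p.1 p.2 (x - m) y = FI ψ p.1 (p.2 + 2 ^ p.1 * m) x y := by
  rw [FI_eq, FI_eq, ← ctr_shift, sub_sub]

lemma FI_summable (ψ : SchwartzMap ℝ ℂ) (hsupp : Function.support (𝓕 ⇑ψ) ⊆ Sset) (p : ℕ × ℕ) (x y : ℝ)
    (hy : 0 ≤ y) (hp : p.2 < 2 ^ p.1) : Summable (fun m : ℤ => FI ψ p.1 p.2 (x - (m : ℝ)) y) := by
  obtain ⟨C, hC, h⟩ := single_bound ψ hsupp
  have : ∑' m : ℤ, ‖FI ψ p.1 p.2 (x - (m : ℝ)) y‖ₑ ≠ ⊤ :=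
    ne_top_of_le_ne_top ENNReal.ofReal_ne_top (h p x y hy hp)
  apply Summable.of_norm
  have h2 := ENNReal.summable_toReal this
  simpa using h2

/-- The measure on the strip. -/
def muO : Measure (ℝ × ℝ) := (volume.restrict (Set.Ico 0 1)).prod (volume.restrict (Set.Ioi 0))

instance : SFinite muO := by unfold muO; infer_instance

lemma muO_eq : muO = (volume : Measure (ℝ × ℝ)).restrict (Set.Ico 0 1 ×ˢ Set.Ioi 0) := by
  unfold muO
  rw [Measure.prod_restrict]; rfl

lemma muO_le : muO ≤ volume.prod (volume.restrict (Set.Ioi 0)) := by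
  have : (volume : Measure ℝ).prod ((volume : Measure ℝ).restrict (Set.Ioi 0)) =
    (volume.prod volume).restrict (Set.univ ×ˢ Set.Ioi 0) := by
    rw [← Measure.prod_restrict, Measure.restrict_univ]
  rw [this, muO_eq]
  exact Measure.restrict_mono (Set.prod_mono (Set.subset_univ _) le_rfl) le_rfl

lemma muO_ae : ∀ᵐ p ∂muO, p.1 ∈ Set.Ico (0:ℝ) 1 ∧ 0 < p.2 := by
  rw [muO_eq]
  filter_upwards [ae_restrict_mem (measurableSet_Ico.prod measurableSet_Ioi)] with p hp
  exact ⟨hp.1, hp.2⟩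

lemma FIs_meas (ψ : SchwartzMap ℝ ℂ) (j k : ℤ) (m : ℤ) :
    Measurable (fun p : ℝ × ℝ => FI ψ j k (p.1 - m) p.2) :=
  (FI_meas ψ j k).measurable.comp (by fun_prop : Measurable fun p : ℝ × ℝ => (p.1 - m, p.2))

lemma aI_meas (ψ : SchwartzMap ℝ ℂ) (q : ℕ × ℕ) : Measurable (fun p : ℝ × ℝ => aI ψ q p.1 p.2) := by
  unfold aI
  exact Measurable.tsum fun m => (FIs_meas ψ q.1 q.2 m).enorm

lemma GI_aemeas (ψ : SchwartzMap ℝ ℂ) (hsupp : Function.support (𝓕 ⇑ψ) ⊆ Sset) (q : ℕ × ℕ) (hq : q.2 < 2 ^ q.1) :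
    AEMeasurable (fun p : ℝ × ℝ => GI ψ q.1 q.2 p.1 p.2) muO := by
  apply aemeasurable_of_tendsto_metrizable_ae (Filter.atTop : Filter (Finset ℤ))
    (f := fun (s : Finset ℤ) (p : ℝ × ℝ) => ∑ m ∈ s, FI ψ q.1 q.2 (p.1 - ((m : ℤ) : ℝ)) p.2)
  · intro s
    exact (Finset.measurable_sum s fun m _ => FIs_meas ψ q.1 q.2 m).aemeasurable
  · filter_upwards [muO_ae] with p hp
    exact (FI_summable ψ hsupp q p.1 p.2 hp.2.le hq).hasSum

lemma lint_fin (ψ : SchwartzMap ℝ ℂ) (hsupp : Function.support (𝓕 ⇑ψ) ⊆ Sset) (q r : ℕ × ℕ)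
    (hq : q.2 < 2 ^ q.1) (hr : r.2 < 2 ^ r.1) :
    ∫⁻ p, aI ψ q p.1 p.2 * aI ψ r p.1 p.2 * ENNReal.ofReal p.2 ∂muO < ⊤ := by
  obtain ⟨C, hC, h⟩ := single_bound ψ hsupp
  have hlq := len_pos q.1
  have hlr := len_pos r.1
  have hi : Integrable (fun p : ℝ × ℝ => C ^ 2 * len q.1 * ((1 : ℝ) * ((len q.1 + |p.2 - 0|) ^ 2)⁻¹)) muO := by
    apply Integrable.const_mul
    apply Integrable.mul_prod (f := fun _ : ℝ => (1:ℝ)) (g := fun y : ℝ => ((len q.1 + |y - 0|) ^ 2)⁻¹)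
    · exact integrable_const _
    · exact (integrable_kern _ 0 hlq).restrict
  refine lt_of_le_of_lt ?_ hi.lintegral_lt_top
  apply lintegral_mono_ae
  filter_upwards [muO_ae] with p hp
  have h2 := hp.2
  calc _ ≤ ENNReal.ofReal (C * (len q.1 / (len q.1 + p.2) ^ 2)) * ENNReal.ofReal (C * (len r.1 / (len r.1 + p.2) ^ 2))
        * ENNReal.ofReal p.2 := by
        gcongr
        · exact h q p.1 p.2 h2.le hq
        · exact h r p.1 p.2 h2.le hr
    _ = ENNReal.ofReal (C ^ 2 * len q.1 * ((len q.1 + p.2) ^ 2)⁻¹ * (len r.1 * p.2 / (len r.1 + p.2) ^ 2)) := by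
        rw [← ENNReal.ofReal_mul (by positivity), ← ENNReal.ofReal_mul (by positivity)]
        congr 1
        field_simp
    _ ≤ _ := by
        apply ENNReal.ofReal_le_ofReal
        rw [sub_zero, abs_of_pos h2]
        have : len r.1 * p.2 / (len r.1 + p.2) ^ 2 ≤ 1 := by
          rw [div_le_one (by positivity)]
          nlinarith
        have h3 : 0 ≤ C ^ 2 * len q.1 * ((len q.1 + p.2) ^ 2)⁻¹ := by positivity
        nlinarith

lemma GG_integrable (ψ : SchwartzMap ℝ ℂ) (hsupp : Function.support (𝓕 ⇑ψ) ⊆ Sset) (q r : ℕ × ℕ)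
    (hq : q.2 < 2 ^ q.1) (hr : r.2 < 2 ^ r.1) (w : ℝ → ℝ) (hw : Continuous w) (c : ℝ)
    (hwb : ∀ y, 0 < y → |w y| ≤ c * y) :
    Integrable (fun p : ℝ × ℝ => GI ψ q.1 q.2 p.1 p.2 * (starRingEnd ℂ) (GI ψ r.1 r.2 p.1 p.2) * (w p.2 : ℂ)) muO := by
  constructor
  · apply AEMeasurable.aestronglyMeasurable
    apply AEMeasurable.mul
    · exact (GI_aemeas ψ hsupp q hq).mul (Complex.continuous_conj.measurable.comp_aemeasurable (GI_aemeas ψ hsupp r hr))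
    · exact (by fun_prop : Continuous fun p : ℝ × ℝ => (w p.2 : ℂ)).measurable.aemeasurable
  · have h1 := lint_fin ψ hsupp q r hq hr
    have h2 : ∫⁻ p, ENNReal.ofReal c * (aI ψ q p.1 p.2 * aI ψ r p.1 p.2 * ENNReal.ofReal p.2) ∂muO < ⊤ := by
      rw [lintegral_const_mul']
      · exact ENNReal.mul_lt_top ENNReal.ofReal_lt_top h1
      · exact ENNReal.ofReal_ne_top
    refine lt_of_le_of_lt ?_ h2
    apply lintegral_mono_ae
    filter_upwards [muO_ae] with p hp
    have hc : 0 ≤ c := by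
      have := hwb 1 one_pos
      have := abs_nonneg (w 1)
      linarith
    rw [enorm_mul, enorm_mul, RCLike.enorm_conj]
    have : ‖(w p.2 : ℂ)‖ₑ ≤ ENNReal.ofReal c * ENNReal.ofReal p.2 := by
      rw [← ENNReal.ofReal_mul hc, ← ofReal_norm, Complex.norm_real]
      exact ENNReal.ofReal_le_ofReal (hwb p.2 hp.2)
    calc _ ≤ aI ψ q p.1 p.2 * aI ψ r p.1 p.2 * (ENNReal.ofReal c * ENNReal.ofReal p.2) := by
          gcongr
          · exact GI_le ψ q p.1 p.2
          · exact GI_le ψ r p.1 p.2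
      _ = _ := by ring

lemma strip_orth (ψ : SchwartzMap ℝ ℂ) (hsupp : Function.support (𝓕 ⇑ψ) ⊆ Sset)
    (horth : ∀ j k j' k' : ℤ,
      (∫ x : ℝ, psiI ψ j k x * (starRingEnd ℂ) (psiI ψ j' k' x)) =
        if j = j' ∧ k = k' then 1 else 0) (q r : ℕ × ℕ)
    (hq : q.2 < 2 ^ q.1) (hr : r.2 < 2 ^ r.1) (hne : q ≠ r) :
    ∫ p, GI ψ q.1 q.2 p.1 p.2 * (starRingEnd ℂ) (GI ψ r.1 r.2 p.1 p.2) * (p.2 : ℂ) ∂muO = 0 := by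
  set f : ℤ × ℤ → ℝ × ℝ → ℂ := fun mn p => FI ψ q.1 q.2 (p.1 - (mn.1 : ℝ)) p.2 *
    (starRingEnd ℂ) (FI ψ r.1 r.2 (p.1 - (mn.2 : ℝ)) p.2) * (p.2 : ℂ) with hf
  have hfm : ∀ i, Measurable (f i) := by
    intro i
    apply Measurable.mul
    · exact (FIs_meas ψ q.1 q.2 i.1).mul (Complex.continuous_conj.measurable.comp (FIs_meas ψ r.1 r.2 i.2))
    · fun_prop
  have e1 : ∫ p, GI ψ q.1 q.2 p.1 p.2 * (starRingEnd ℂ) (GI ψ r.1 r.2 p.1 p.2) * (p.2 : ℂ) ∂muO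
      = ∫ p, ∑' i, f i p ∂muO := by
    apply integral_congr_ae
    filter_upwards [muO_ae] with p hp
    have s1 := (FI_summable ψ hsupp q p.1 p.2 hp.2.le hq).norm
    have s2 : Summable fun m : ℤ => ‖(starRingEnd ℂ) (FI ψ r.1 r.2 (p.1 - (m : ℝ)) p.2)‖ := by
      simpa using (FI_summable ψ hsupp r p.1 p.2 hp.2.le hr).norm
    simp only [GI, hf]
    rw [Complex.conj_tsum, tsum_mul_tsum_of_summable_norm s1 s2, tsum_mul_right]
  have hfin : ∑' i, ∫⁻ p, ‖f i p‖ₑ ∂muO ≠ ⊤ := by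
    rw [← lintegral_tsum fun i => (hfm i).enorm.aemeasurable]
    refine ne_top_of_le_ne_top (lint_fin ψ hsupp q r hq hr).ne ?_
    apply lintegral_mono_ae
    filter_upwards [muO_ae] with p hp
    apply le_of_eq
    simp only [hf, enorm_mul, RCLike.enorm_conj]
    have : ‖(p.2 : ℂ)‖ₑ = ENNReal.ofReal p.2 := by
      rw [← ofReal_norm, Complex.norm_real, Real.norm_of_nonneg hp.2.le]
    rw [this, ENNReal.tsum_mul_right]
    congr 1
    rw [ENNReal.tsum_prod (f := fun m n : ℤ => ‖FI ψ q.1 q.2 (p.1 - (m:ℝ)) p.2‖ₑ * ‖FI ψ r.1 r.2 (p.1 - (n:ℝ)) p.2‖ₑ)]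
    simp_rw [ENNReal.tsum_mul_left, ENNReal.tsum_mul_right]
    rfl
  rw [e1, integral_tsum (fun i => (hfm i).aestronglyMeasurable) hfin]
  have hsumm : Summable (fun i => ∫ p, f i p ∂muO) := by
    apply Summable.of_norm
    have := ENNReal.summable_toReal (f := fun i => ‖∫ p, f i p ∂muO‖ₑ) (ne_top_of_le_ne_top hfin
      (ENNReal.tsum_le_tsum fun i => enorm_integral_le_lintegral_enorm _))
    simpa using this
  let e : ℤ × ℤ ≃ ℤ × ℤ :=
    { toFun := fun a => (a.2, a.2 + a.1)
      invFun := fun b => (b.2 - b.1, b.1)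
      left_inv := fun a => by ext <;> simp
      right_inv := fun b => by ext <;> simp }
  rw [← e.tsum_eq]
  have hsumm' : Summable (fun a => ∫ p, f (e a) p ∂muO) := e.summable_iff.mpr hsumm
  rw [hsumm'.tsum_prod]
  refine (tsum_congr fun d => ?_).trans tsum_zero
  -- unfold for fixed offset
  set H : ℝ → ℂ := fun x => ∫ y in Set.Ioi (0:ℝ), FI ψ q.1 q.2 x y *
    (starRingEnd ℂ) (FI ψ r.1 (r.2 + 2 ^ r.1 * d) x y) * (y : ℂ) with hH
  have hHi : Integrable H := (FF_integrable ψ hsupp q.1 q.2 r.1 (r.2 + 2 ^ r.1 * d)).integral_prod_left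
  have hH0 : ∫ x, H x = 0 := by
    apply core_orth ψ hsupp
    rw [horth, if_neg]
    rintro ⟨h1, h2⟩
    apply hne
    have h1' : q.1 = r.1 := by exact_mod_cast h1
    have e1 : ((r.2 : ℤ) + 2 ^ r.1 * d) % 2 ^ r.1 = r.2 := by
      rw [Int.add_mul_emod_self_left]
      exact Int.emod_eq_of_lt (by positivity) (by exact_mod_cast hr)
    have e2 : (q.2 : ℤ) % 2 ^ r.1 = q.2 := by
      rw [← h1']
      exact Int.emod_eq_of_lt (by positivity) (by exact_mod_cast hq)
    rw [← h2, e2] at e1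
    exact Prod.ext h1' (by exact_mod_cast e1)
  have hterm : ∀ m : ℤ, ∫ p, f (e (d, m)) p ∂muO = ∫ x in (0 + ((-m : ℤ) : ℝ))..(0 + ((-m : ℤ) : ℝ) + 1), H x := by
    intro m
    have hi : Integrable (f (e (d, m))) muO := by
      have := (FF_integrable ψ hsupp q.1 (q.2 + 2 ^ q.1 * m) r.1 (r.2 + 2 ^ r.1 * (m + d))).mono_measure muO_le
      refine this.congr (Filter.Eventually.of_forall fun p => ?_)
      simp only [hf, e, Equiv.coe_fn_mk]
      rw [FI_shift, FI_shift]
    rw [show muO = (volume.restrict (Set.Ico 0 1)).prod (volume.restrict (Set.Ioi 0)) from rfl] at hi ⊢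
    rw [integral_prod _ hi, integral_Ico_eq_integral_Ioc, ← intervalIntegral.integral_of_le zero_le_one]
    have : ∀ x : ℝ, (∫ y in Set.Ioi (0:ℝ), f (e (d, m)) (x, y)) = H (x - m) := by
      intro x
      simp only [hf, hH, e, Equiv.coe_fn_mk]
      congr 1; ext y
      rw [← FI_shift ψ r (x - m) y d]
      push_cast
      rw [sub_sub]
    simp_rw [this]
    rw [intervalIntegral.integral_comp_sub_right]
    congr 1 <;> push_cast <;> ring
  simp_rw [hterm]
  have hs := hHi.hasSum_intervalIntegral 0
  rw [hH0] at hs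
  exact ((Equiv.neg ℤ).hasSum_iff.mpr hs).tsum_eq

/-- The weight. -/
def wt (y : ℝ) : ℝ := (1 - Real.exp (-(4 * π * y))) * Real.exp (-(2 * π * y))

lemma wt_cont : Continuous wt := by unfold wt; fun_prop

lemma wt_le (y : ℝ) (hy : 0 < y) : |wt y| ≤ 4 * π * y := by
  have hp := Real.pi_pos
  have h1 : Real.exp (-(4 * π * y)) ≤ 1 := Real.exp_le_one_iff.mpr (by have : 0 < 4 * π * y := by positivity
                                                                       linarith)
  have h2 : Real.exp (-(2 * π * y)) ≤ 1 := Real.exp_le_one_iff.mpr (by have : 0 < 2 * π * y := by positivity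
                                                                       linarith)
  have h3 := Real.add_one_le_exp (-(4 * π * y))
  have h4 := Real.exp_pos (-(2 * π * y))
  unfold wt
  rw [abs_of_nonneg (mul_nonneg (by linarith) h4.le)]
  nlinarith

lemma wt_sub_le (y : ℝ) (hy : 0 < y) : |wt y - 4 * π * y| ≤ 24 * π ^ 2 * y ^ 2 := by
  have hp := Real.pi_pos
  have h0 := wt_le y hy
  have h0' := le_abs_self (wt y)
  rw [abs_of_nonpos (by linarith)]
  unfold wt
  set s := 4 * π * y with hs
  have hspos : 0 < s := by positivity
  have h3 : Real.exp (-s) ≤ 1 - s + s ^ 2 := by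
    rw [Real.exp_neg]
    have := Real.add_one_le_exp s
    calc (Real.exp s)⁻¹ ≤ (s + 1)⁻¹ := inv_anti₀ (by positivity) this
      _ ≤ _ := by
        rw [inv_le_iff_one_le_mul₀ (by positivity)]
        nlinarith [pow_pos hspos 3]
  have h4 : 1 - s / 2 ≤ Real.exp (-(2 * π * y)) := by
    have := Real.add_one_le_exp (-(2 * π * y))
    rw [hs]; linarith
  have h5 : Real.exp (-(2 * π * y)) ≤ 1 := Real.exp_le_one_iff.mpr (by have : 0 < 2 * π * y := by positivity
                                                                       linarith)
  have h6 := Real.add_one_le_exp (-s)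
  have e : 24 * π ^ 2 * y ^ 2 = 3 / 2 * s ^ 2 := by rw [hs]; ring
  rw [e]
  set E := Real.exp (-(2 * π * y))
  have hE : 0 < E := Real.exp_pos _
  nlinarith [mul_nonneg hspos.le (sub_nonneg.mpr h4), mul_nonneg hE.le (sub_nonneg.mpr h3), mul_nonneg (sq_nonneg s) (sub_nonneg.mpr h5)]

/-- Auxiliary profile. -/
def kap (L s : ℝ) : ℝ := Real.sqrt L / (Real.sqrt s * (L + s))

lemma kap_nonneg (L s : ℝ) (hL : 0 < L) (hs : 0 ≤ s) : 0 ≤ kap L s := by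
  unfold kap; positivity

lemma kap_mul (L y D : ℝ) (hL : 0 < L) :
    L * (kap L D * kap L y) = L ^ 2 / (Real.sqrt y * Real.sqrt D * ((L + y) * (L + D))) := by
  unfold kap
  rw [div_mul_div_comm, Real.mul_self_sqrt hL.le, ← mul_div_assoc]
  congr 1 <;> ring

lemma sqrt_mul_le (y D : ℝ) (hy : 0 < y) (hD : 0 < D) : Real.sqrt y * Real.sqrt D ≤ y + D := by
  have h1 := Real.sq_sqrt hy.le
  have h2 := Real.sq_sqrt hD.le
  nlinarith [sq_nonneg (Real.sqrt y - Real.sqrt D), Real.sqrt_nonneg y, Real.sqrt_nonneg D]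

lemma r1 (C L y : ℝ) (hL : 0 < L) (hL1 : L ≤ 1) (hy : 0 < y) :
    C * (L / (y * (L + y))) * (C * (L / (y * (L + y)))) * (24 * π ^ 2 * y ^ 2) ≤
      24 * π ^ 2 * C ^ 2 * (L / (L + y) ^ 2) := by
  have e : C * (L / (y * (L + y))) * (C * (L / (y * (L + y)))) * (24 * π ^ 2 * y ^ 2) =
      24 * π ^ 2 * C ^ 2 * (L * L / (L + y) ^ 2) := by
    field_simp
  rw [e]
  have : L * L ≤ L := by nlinarith
  gcongr

lemma r2 (C L y D : ℝ) (hC : 0 < C) (hL : 0 < L) (hy : 0 < y) (hD : 0 < D) (hyL : y ≤ L) (hDL : D ≤ L) :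
    (C / (y + D) * (C / y + C / (y + D)) + (C / y + C / (y + D)) * (C / (y + D))) * (4 * π * y) ≤
      64 * π * C ^ 2 * (L * (kap L D * kap L y)) := by
  rw [kap_mul L y D hL]
  have hp := Real.pi_pos
  have su := Real.sqrt_pos.mpr hy
  have sv := Real.sqrt_pos.mpr hD
  have h1 : C / (y + D) ≤ C / y := by gcongr; linarith
  have hs := sqrt_mul_le y D hy hD
  have h2 : 1 / (y + D) ≤ 4 * (L ^ 2 / (Real.sqrt y * Real.sqrt D * ((L + y) * (L + D)))) := by
    calc 1 / (y + D) ≤ 1 / (Real.sqrt y * Real.sqrt D) := by gcongr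
      _ = (L + y) * (L + D) / (Real.sqrt y * Real.sqrt D * ((L + y) * (L + D))) := by field_simp
      _ ≤ (2 * L) * (2 * L) / (Real.sqrt y * Real.sqrt D * ((L + y) * (L + D))) := by
          gcongr <;> linarith
      _ = _ := by ring
  calc _ ≤ (C / (y + D) * (C / y + C / y) + (C / y + C / y) * (C / (y + D))) * (4 * π * y) := by gcongr
    _ = 16 * π * C ^ 2 * (1 / (y + D)) := by field_simp; ring
    _ ≤ 16 * π * C ^ 2 * (4 * (L ^ 2 / (Real.sqrt y * Real.sqrt D * ((L + y) * (L + D))))) := by gcongr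
    _ = _ := by ring

lemma r3 (C L y D : ℝ) (hC : 0 < C) (hL : 0 < L) (hy : 0 < y) (hD : 0 < D) :
    C * (L / ((y + D) * (L + (y + D)))) * (C * (L / ((y + D) * (L + (y + D))))) * (4 * π * y) ≤
      64 * π * C ^ 2 * (L * (kap L D * kap L y)) := by
  rw [kap_mul L y D hL]
  have hp := Real.pi_pos
  have su := Real.sqrt_pos.mpr hy
  have sv := Real.sqrt_pos.mpr hD
  have hs := sqrt_mul_le y D hy hD
  calc _ = 4 * π * C ^ 2 * (L ^ 2 * y / ((y + D) * ((y + D) * ((L + (y + D)) * (L + (y + D)))))) := by field_simp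
    _ ≤ 4 * π * C ^ 2 * (L ^ 2 * y / (y * (Real.sqrt y * Real.sqrt D * ((L + y) * (L + D))))) := by
        gcongr <;> linarith
    _ = 4 * π * C ^ 2 * (L ^ 2 / (Real.sqrt y * Real.sqrt D * ((L + y) * (L + D)))) := by field_simp
    _ ≤ _ := by gcongr; norm_num

lemma r4 (C L y : ℝ) (hL : 0 < L) (hy : 0 < y) (hyL : L / (2 * π) ≤ y) :
    C * (L / (y * (L + y))) * (C * (L / (y * (L + y)))) * (4 * π * y) ≤
      24 * π ^ 2 * C ^ 2 * (L / (L + y) ^ 2) := by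
  have hp := Real.pi_pos
  rw [div_le_iff₀ (by positivity)] at hyL
  have e : C * (L / (y * (L + y))) * (C * (L / (y * (L + y)))) * (4 * π * y) =
      4 * π * C ^ 2 * (L / (L + y) ^ 2) * (L / y) := by
    field_simp
  rw [e]
  have : L / y ≤ 2 * π := by rw [div_le_iff₀ hy]; linarith
  calc _ ≤ 4 * π * C ^ 2 * (L / (L + y) ^ 2) * (2 * π) := by gcongr
    _ = 8 * π ^ 2 * C ^ 2 * (L / (L + y) ^ 2) := by ring
    _ ≤ _ := by gcongr; norm_num

lemma k1_integrable : Integrable (fun t : ℝ => kap 1 |t|) := by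
  have h0 : IntegrableOn (fun t : ℝ => kap 1 t) (Set.Ioi 0) := by
    rw [← Set.Ioc_union_Ioi_eq_Ioi (zero_le_one' ℝ)]
    have hm : Measurable (fun t : ℝ => kap 1 t) := by unfold kap; fun_prop
    apply IntegrableOn.union
    · have : IntegrableOn (fun t : ℝ => t ^ (-(1/2) : ℝ)) (Set.Ioc 0 1) := by
        have := intervalIntegral.intervalIntegrable_rpow' (a := 0) (b := 1) (r := -(1/2)) (by norm_num)
        rwa [intervalIntegrable_iff_integrableOn_Ioc_of_le zero_le_one] at this
      apply this.mono' hm.aestronglyMeasurable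
      filter_upwards [ae_restrict_mem measurableSet_Ioc] with t ht
      rw [Real.norm_of_nonneg (kap_nonneg 1 t one_pos ht.1.le), Real.rpow_neg ht.1.le, ← Real.sqrt_eq_rpow]
      unfold kap
      have := Real.sqrt_pos.mpr ht.1
      rw [Real.sqrt_one, one_div]
      apply inv_anti₀ this
      have := ht.1
      nlinarith
    · have : IntegrableOn (fun t : ℝ => t ^ (-(3/2) : ℝ)) (Set.Ioi 1) :=
        integrableOn_Ioi_rpow_of_lt (by norm_num) one_pos
      apply this.mono' hm.aestronglyMeasurable
      filter_upwards [ae_restrict_mem measurableSet_Ioi] with t ht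
      have ht0 : 0 < t := lt_trans one_pos ht
      have e : t ^ (-(3/2) : ℝ) = (Real.sqrt t * t)⁻¹ := by
        rw [Real.rpow_neg ht0.le, Real.sqrt_eq_rpow]
        congr 1
        nth_rewrite 3 [← Real.rpow_one t]
        rw [← Real.rpow_add ht0]; norm_num
      rw [Real.norm_of_nonneg (kap_nonneg 1 t one_pos ht0.le), e]
      unfold kap
      have := Real.sqrt_pos.mpr ht0
      rw [Real.sqrt_one, one_div]
      apply inv_anti₀ (by positivity)
      nlinarith
  rw [← integrableOn_univ, ← Set.Iic_union_Ioi (a := (0:ℝ))]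
  apply IntegrableOn.union
  · rw [integrableOn_Iic_iff_integrableOn_Iio]
    have h1 : IntegrableOn (fun t : ℝ => kap 1 (-t)) (Set.Iio 0) := by
      have := h0.comp_neg
      simpa using this
    refine h1.congr_fun (fun t ht => ?_) measurableSet_Iio
    simp only [abs_of_neg (Set.mem_Iio.mp ht)]
  · refine h0.congr_fun (fun t ht => ?_) measurableSet_Ioi
    simp only [abs_of_pos (Set.mem_Ioi.mp ht)]

lemma scale_lint (g : ℝ → ℝ) (hg : Integrable g) (hg0 : ∀ t, 0 ≤ g t) (L a : ℝ) (hL : 0 < L) :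
    ∫⁻ y, ENNReal.ofReal (L⁻¹ * g ((y - a) / L)) = ENNReal.ofReal (∫ t, g t) := by
  rw [← ofReal_integral_eq_lintegral_ofReal]
  · congr 1
    rw [integral_const_mul, integral_sub_right_eq_self (fun y => g (y / L)) a, Measure.integral_comp_div,
      abs_of_pos hL, smul_eq_mul, inv_mul_cancel_left₀ hL.ne']
  · exact ((hg.comp_div hL.ne').comp_sub_right a).const_mul _
  · filter_upwards with y
    have := hg0 ((y - a) / L)
    positivity

lemma kap_lint : ∃ c : ℝ, 0 ≤ c ∧ ∀ L a : ℝ, 0 < L → ∫⁻ y, ENNReal.ofReal (kap L |y - a|) = ENNReal.ofReal c := by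
  refine ⟨∫ t, kap 1 |t|, integral_nonneg fun t => kap_nonneg 1 _ one_pos (abs_nonneg _), fun L a hL => ?_⟩
  rw [← scale_lint _ k1_integrable (fun t => kap_nonneg 1 _ one_pos (abs_nonneg _)) L a hL]
  congr 1; ext y
  congr 1
  unfold kap
  rw [abs_div, abs_of_pos hL, Real.sqrt_one, Real.sqrt_div (abs_nonneg _)]
  have h1 := Real.sqrt_pos.mpr hL
  have h2 := abs_nonneg (y - a)
  have : 1 + |y - a| / L = (L + |y - a|) / L := by field_simp
  rw [this]
  by_cases hz : Real.sqrt |y - a| = 0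
  · simp [hz]
  field_simp

lemma quad_lint : ∃ c : ℝ, 0 ≤ c ∧ ∀ L : ℝ, 0 < L → ∫⁻ y, ENNReal.ofReal (L / (L + |y|) ^ 2) = ENNReal.ofReal c := by
  refine ⟨∫ t, ((1 + |t - 0|) ^ 2)⁻¹, integral_nonneg fun t => by positivity, fun L hL => ?_⟩
  rw [← scale_lint _ (integrable_kern 1 0 one_pos) (fun t => by positivity) L 0 hL]
  congr 1; ext y
  congr 1
  rw [sub_zero, sub_zero, abs_div, abs_of_pos hL]
  have h2 := abs_nonneg y
  have : 1 + |y| / L = (L + |y|) / L := by field_simp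
  rw [this]
  field_simp

lemma len_nat (j : ℕ) : len (j : ℤ) = 1 / 2 ^ j := by
  simp [len, zpow_neg]

lemma len_le_one (j : ℕ) : len (j : ℤ) ≤ 1 := by
  rw [len_nat, div_le_one (by positivity)]
  exact one_le_pow₀ (by norm_num)

lemma len_le_half (j : ℕ) (hj : j ≠ 0) : len (j : ℤ) ≤ 1 / 2 := by
  rw [len_nat]
  have : (2:ℝ) ^ 1 ≤ 2 ^ j := pow_le_pow_right₀ (by norm_num) (by omega)
  apply one_div_le_one_div_of_le (by norm_num) (by linarith)

lemma ctr_nat (j k : ℕ) : ctr j k = (k + 1 / 2) * len j := by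
  simp only [ctr, len]; push_cast; ring

lemma ySet_bdd (j : ℕ) (hj : j ≠ 0) (y : ℝ) (hy : y ∈ ySet j) : y ≤ len j := by
  unfold ySet at hy
  rw [if_neg hj] at hy
  have h2 := hy.2
  have hl := len_pos j
  have hh := len_le_half j hj
  have hp := Real.pi_gt_three
  have := Real.one_sub_inv_le_log_of_pos (x := 1 - len j) (by linarith)
  have h3 : (1 - len j)⁻¹ ≤ 1 + 2 * len j := by
    rw [inv_le_iff_one_le_mul₀ (by linarith)]
    nlinarith
  rw [lt_div_iff₀ (by positivity)] at h2
  nlinarith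

lemma ySet_compl (j : ℕ) (y : ℝ) (hy0 : 0 < y) (hy : y ∉ ySet j) : len j / (2 * π) ≤ y := by
  unfold ySet at hy
  split_ifs at hy with hj
  · exact absurd hy0 hy
  · have hh := len_le_half j hj
    have h2 : -(Real.log (1 - len (j : ℤ))) / (2 * π) ≤ y := by
      by_contra h
      exact hy ⟨hy0, not_le.mp h⟩
    refine le_trans ?_ h2
    have := Real.log_le_sub_one_of_pos (x := 1 - len j) (by linarith)
    have hp := Real.pi_pos
    gcongr
    linarith

lemma ySet_pos (j : ℕ) : ySet j ⊆ Set.Ioi 0 := by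
  unfold ySet
  split_ifs
  · exact le_rfl
  · exact fun y hy => hy.1

lemma ySet_meas (j : ℕ) : MeasurableSet (ySet j) := by
  unfold ySet
  split_ifs
  · exact measurableSet_Ioi
  · exact measurableSet_Ioo

lemma dySet_sub (j k : ℕ) (hk : k < 2 ^ j) : dySet j k ⊆ Set.Ico 0 1 := by
  have hl := len_pos j
  apply Set.Ico_subset_Ico
  · positivity
  · have : ((k : ℝ) + 1) ≤ 2 ^ j := by exact_mod_cast hk
    rw [len_nat, mul_one_div, div_le_one (by positivity)]
    exact this

lemma ctr_mem (j k : ℕ) : ctr j k ∈ dySet j k := by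
  have hl := len_pos j
  rw [ctr_nat]
  constructor <;> nlinarith

lemma geom1 (j k j0 k0 : ℕ) (h : dySet j k ⊆ dySet j0 k0) : j0 ≤ j ∧ ctr j k ∈ dySet j0 k0 := by
  refine ⟨?_, h (ctr_mem j k)⟩
  have hl := len_pos j
  have := (Set.Ico_subset_Ico_iff (by nlinarith)).mp h
  have h2 : len j ≤ len j0 := by nlinarith [this.1, this.2]
  rw [len_nat, len_nat, one_div_le_one_div (by positivity) (by positivity)] at h2
  exact (pow_le_pow_iff_right₀ (by norm_num : (1:ℝ) < 2)).mp h2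

lemma geom2 (j k j0 k0 : ℕ) (hj : j0 ≤ j) (h : ctr j k ∈ dySet j0 k0) : dySet j k ⊆ dySet j0 k0 := by
  obtain ⟨n, rfl⟩ := Nat.exists_eq_add_of_le' hj
  have hl := len_pos j0
  have e : len j0 = 2 ^ n * len ((n + j0 : ℕ) : ℤ) := by
    rw [len_add]
    have : (2:ℝ) ^ n * (1 / 2) ^ n = 1 := by rw [← mul_pow]; norm_num
    calc len j0 = len j0 * ((2:ℝ) ^ n * (1 / 2) ^ n) := by rw [this, mul_one]
      _ = _ := by ring
  have hl' := len_pos ((n + j0 : ℕ) : ℤ)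
  rw [ctr_nat] at h
  obtain ⟨h1, h2⟩ := h
  rw [e, ← mul_assoc] at h1 h2
  have h1' := le_of_mul_le_mul_right h1 hl'
  have h2' := lt_of_mul_lt_mul_right h2 hl'.le
  have a1 : k0 * 2 ^ n ≤ k := by
    have : ((k0 * 2 ^ n : ℕ) : ℝ) < ((k + 1 : ℕ) : ℝ) := by push_cast; linarith
    have := Nat.cast_lt.mp this
    omega
  have a2 : k + 1 ≤ (k0 + 1) * 2 ^ n := by
    have : ((k : ℕ) : ℝ) < (((k0 + 1) * 2 ^ n : ℕ) : ℝ) := by push_cast; linarith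
    have := Nat.cast_lt.mp this
    omega
  have a1' : (k0 : ℝ) * 2 ^ n ≤ k := by exact_mod_cast a1
  have a2' : (k : ℝ) + 1 ≤ (k0 + 1) * 2 ^ n := by exact_mod_cast a2
  apply Set.Ico_subset_Ico
  · rw [e, ← mul_assoc]; gcongr
  · rw [e, ← mul_assoc]; gcongr

/-- Distance to the relevant endpoints. -/
def DD (a b x : ℝ) : ℝ := min (min |x - a| |x - b|) (min |x - (a + 1)| |x - (b - 1)|)

lemma cross (a b x c : ℝ) (hab : a ≤ b) (h : (x ∈ Set.Ico a b ∧ c ∉ Set.Ico a b) ∨ (x ∉ Set.Ico a b ∧ c ∈ Set.Ico a b)) :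
    DD a b x ≤ |x - c| := by
  have h1 : DD a b x ≤ |x - a| := (min_le_left _ _).trans (min_le_left _ _)
  have h2 : DD a b x ≤ |x - b| := (min_le_left _ _).trans (min_le_right _ _)
  simp only [Set.mem_Ico, not_and_or, not_le, not_lt] at h
  rcases h with ⟨⟨u1, u2⟩, v | v⟩ | ⟨v | v, u1, u2⟩
  · refine h1.trans ?_
    rw [abs_of_nonneg (by linarith), abs_of_nonneg (by linarith)]; linarith
  · refine h2.trans ?_
    rw [abs_of_nonpos (by linarith), abs_of_nonpos (by linarith)]; linarith
  · refine h1.trans ?_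
    rw [abs_of_nonpos (by linarith), abs_of_nonpos (by linarith)]; linarith
  · refine h2.trans ?_
    rw [abs_of_nonneg (by linarith), abs_of_nonneg (by linarith)]; linarith

/-- distance for intervals inside K when the point is outside. -/
lemma dist_S (a b x c : ℝ) (ha : 0 ≤ a) (hb : b ≤ 1) (hab : a ≤ b) (hx : x ∈ Set.Ico (0:ℝ) 1) (hxK : x ∉ Set.Ico a b)
    (hc : c ∈ Set.Ico a b) (m : ℤ) : DD a b x ≤ |x - m - c| := by
  rcases lt_trichotomy m 0 with hm | hm | hm
  · have hm' : (m : ℝ) ≤ -1 := by exact_mod_cast (by omega : m ≤ -1)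
    have : DD a b x ≤ |x - (b - 1)| := (min_le_right _ _).trans (min_le_right _ _)
    refine this.trans ?_
    have := hx.1; have := hc.2
    rw [abs_of_nonneg (by linarith), abs_of_nonneg (by linarith)]; linarith
  · subst hm
    simpa using cross a b x c hab (Or.inr ⟨hxK, hc⟩)
  · have hm' : (1 : ℝ) ≤ m := by exact_mod_cast (by omega : 1 ≤ m)
    have : DD a b x ≤ |x - (a + 1)| := (min_le_right _ _).trans (min_le_left _ _)
    refine this.trans ?_
    have := hx.2; have := hc.1
    rw [abs_of_nonpos (by linarith), abs_of_nonpos (by linarith)]; linarith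

lemma dist_T (a b x c : ℝ) (ha : 0 ≤ a) (hb : b ≤ 1) (hab : a ≤ b) (hxK : x ∈ Set.Ico a b)
    (hc : c ∈ Set.Ico (0:ℝ) 1) (hcK : c ∉ Set.Ico a b) (m : ℤ) : DD a b x ≤ |x - m - c| := by
  rw [sub_sub]
  apply cross a b x _ hab
  left
  refine ⟨hxK, ?_⟩
  rcases lt_trichotomy m 0 with hm | hm | hm
  · have hm' : (m : ℝ) ≤ -1 := by exact_mod_cast (by omega : m ≤ -1)
    rintro ⟨h1, h2⟩
    have := hc.2
    linarith
  · subst hm; simpa using hcK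
  · have hm' : (1 : ℝ) ≤ m := by exact_mod_cast (by omega : 1 ≤ m)
    rintro ⟨h1, h2⟩
    have := hc.1
    linarith

/-- The integrand for a pair. -/
def gg (ψ : SchwartzMap ℝ ℂ) (q r : ℕ × ℕ) (w : ℝ → ℝ) (p : ℝ × ℝ) : ℂ :=
  GI ψ q.1 q.2 p.1 p.2 * (starRingEnd ℂ) (GI ψ r.1 r.2 p.1 p.2) * (w p.2 : ℂ)

lemma gg_le (ψ : SchwartzMap ℝ ℂ) (q r : ℕ × ℕ) (w : ℝ → ℝ) (p : ℝ × ℝ) (c : ℝ) (hc : |w p.2| ≤ c) :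
    ‖gg ψ q r w p‖ₑ ≤ aI ψ q p.1 p.2 * aI ψ r p.1 p.2 * ENNReal.ofReal c := by
  unfold gg
  rw [enorm_mul, enorm_mul]
  have h1 : ‖(starRingEnd ℂ) (GI ψ r.1 r.2 p.1 p.2)‖ₑ = ‖GI ψ r.1 r.2 p.1 p.2‖ₑ := by
    rw [← ofReal_norm_eq_enorm, ← ofReal_norm_eq_enorm, RCLike.norm_conj]
  have h2 : ‖(w p.2 : ℂ)‖ₑ ≤ ENNReal.ofReal c := by
    rw [← ofReal_norm_eq_enorm, Complex.norm_real, Real.norm_eq_abs]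
    exact ENNReal.ofReal_le_ofReal hc
  rw [h1]
  gcongr
  · exact GI_le ψ q _ _
  · exact GI_le ψ r _ _

/-- First weight. -/
def W1 (Q : Set (ℝ × ℝ)) (p : ℝ × ℝ) : ENNReal :=
  Q.indicator (fun p => ENNReal.ofReal (24 * π ^ 2 * p.2 ^ 2)) p +
    Qᶜ.indicator (fun p => ENNReal.ofReal (4 * π * p.2)) p

/-- Second weight. -/
def W3 (Q : Set (ℝ × ℝ)) (p : ℝ × ℝ) : ENNReal :=
  Q.indicator (fun p => ENNReal.ofReal (4 * π * p.2)) p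

lemma W1_meas (Q : Set (ℝ × ℝ)) (hQ : MeasurableSet Q) : Measurable (W1 Q) := by
  unfold W1
  exact ((by fun_prop : Measurable fun p : ℝ × ℝ => ENNReal.ofReal (24 * π ^ 2 * p.2 ^ 2)).indicator hQ).add
    ((by fun_prop : Measurable fun p : ℝ × ℝ => ENNReal.ofReal (4 * π * p.2)).indicator hQ.compl)

lemma W3_meas (Q : Set (ℝ × ℝ)) (hQ : MeasurableSet Q) : Measurable (W3 Q) :=
  (by fun_prop : Measurable fun p : ℝ × ℝ => ENNReal.ofReal (4 * π * p.2)).indicator hQ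

lemma set_lint (ψ : SchwartzMap ℝ ℂ) (q r : ℕ × ℕ) (w c : ℝ → ℝ) (hc : ∀ y, 0 < y → |w y| ≤ c y)
    (Q : Set (ℝ × ℝ)) (hQ : MeasurableSet Q) :
    ‖∫ p in Q, gg ψ q r w p ∂muO‖ₑ ≤
      ∫⁻ p, aI ψ q p.1 p.2 * aI ψ r p.1 p.2 * Q.indicator (fun p => ENNReal.ofReal (c p.2)) p ∂muO := by
  refine (enorm_integral_le_lintegral_enorm _).trans ?_
  rw [← lintegral_indicator hQ]
  apply lintegral_mono_ae
  filter_upwards [muO_ae] with p hp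
  by_cases h : p ∈ Q
  · simp only [Set.indicator_of_mem h]
    exact gg_le ψ q r w p _ (hc _ hp.2)
  · simp [Set.indicator_of_notMem h]

lemma term3 (ψ : SchwartzMap ℝ ℂ) (q r : ℕ × ℕ) (Q : Set (ℝ × ℝ)) (hQ : MeasurableSet Q) :
    ‖∫ p in Q, gg ψ q r wt p ∂muO‖ₑ ≤ ∫⁻ p, aI ψ q p.1 p.2 * aI ψ r p.1 p.2 * W3 Q p ∂muO :=
  set_lint ψ q r wt (fun y => 4 * π * y) (fun y hy => wt_le y hy) Q hQ

lemma term1 (ψ : SchwartzMap ℝ ℂ) (hsupp : Function.support (𝓕 ⇑ψ) ⊆ Sset)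
    (horth : ∀ j k j' k' : ℤ,
      (∫ x : ℝ, psiI ψ j k x * (starRingEnd ℂ) (psiI ψ j' k' x)) =
        if j = j' ∧ k = k' then 1 else 0) (q r : ℕ × ℕ)
    (hq : q.2 < 2 ^ q.1) (hr : r.2 < 2 ^ r.1) (hne : q ≠ r) (Q : Set (ℝ × ℝ)) (hQ : MeasurableSet Q) :
    ‖∫ p in Q, gg ψ q r wt p ∂muO‖ₑ ≤ ∫⁻ p, aI ψ q p.1 p.2 * aI ψ r p.1 p.2 * W1 Q p ∂muO := by
  have i1 : Integrable (gg ψ q r (fun y => wt y - 4 * π * y)) muO := by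
    refine GG_integrable ψ hsupp q r hq hr _ (wt_cont.sub (by fun_prop)) (8 * π) fun y hy => ?_
    have := wt_le y hy
    have hp := Real.pi_pos
    refine (abs_sub _ _).trans ?_
    rw [abs_of_nonneg (by positivity : 0 ≤ 4 * π * y)]
    linarith
  have i2 : Integrable (gg ψ q r (fun y => 4 * π * y)) muO := by
    refine GG_integrable ψ hsupp q r hq hr _ (by fun_prop) (4 * π) fun y hy => ?_
    rw [abs_of_nonneg (by positivity)]
  have e2 : ∫ p, gg ψ q r (fun y => 4 * π * y) p ∂muO = 0 := by
    have := strip_orth ψ hsupp horth q r hq hr hne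
    have e : ∀ p : ℝ × ℝ, gg ψ q r (fun y => 4 * π * y) p = (4 * π : ℂ) *
      (GI ψ q.1 q.2 p.1 p.2 * (starRingEnd ℂ) (GI ψ r.1 r.2 p.1 p.2) * (p.2 : ℂ)) := by
      intro p; unfold gg; push_cast; ring
    simp only [e]
    rw [integral_const_mul, this, mul_zero]
  have e3 : ∫ p in Q, gg ψ q r (fun y => 4 * π * y) p ∂muO =
      - ∫ p in Qᶜ, gg ψ q r (fun y => 4 * π * y) p ∂muO := by
    rw [← integral_add_compl hQ i2] at e2
    exact eq_neg_of_add_eq_zero_left e2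
  have e4 : ∫ p in Q, gg ψ q r wt p ∂muO = ∫ p in Q, gg ψ q r (fun y => wt y - 4 * π * y) p ∂muO -
      ∫ p in Qᶜ, gg ψ q r (fun y => 4 * π * y) p ∂muO := by
    rw [sub_eq_add_neg, ← e3, ← integral_add i1.integrableOn i2.integrableOn]
    congr 1; ext p
    unfold gg; push_cast; ring
  rw [e4]
  refine (enorm_sub_le).trans ?_
  refine (add_le_add (set_lint ψ q r _ (fun y => 24 * π ^ 2 * y ^ 2) (fun y hy => wt_sub_le y hy) Q hQ)
    (set_lint ψ q r _ (fun y => 4 * π * y) (fun y hy => by rw [abs_of_nonneg (by positivity)]) Qᶜ hQ.compl)).trans ?_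
  rw [← lintegral_add_left]
  · apply lintegral_mono
    intro p
    simp only [W1, mul_add]
    exact le_rfl
  · exact ((aI_meas ψ q).mul (aI_meas ψ r)).mul
      ((by fun_prop : Measurable fun p : ℝ × ℝ => ENNReal.ofReal (24 * π ^ 2 * p.2 ^ 2)).indicator hQ)

lemma term_eq (ψ : SchwartzMap ℝ ℂ) (hsupp : Function.support (𝓕 ⇑ψ) ⊆ Sset) (q r : ℕ × ℕ)
    (hq : q.2 < 2 ^ q.1) (hr : r.2 < 2 ^ r.1) (jK kK : ℕ) (hK : kK < 2 ^ jK) :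
    ∫ x in dySet jK kK, ∫ y in ySet jK, gg ψ q r wt (x, y) =
      ∫ p in dySet jK kK ×ˢ ySet jK, gg ψ q r wt p ∂muO := by
  have i1 : Integrable (gg ψ q r wt) muO :=
    GG_integrable ψ hsupp q r hq hr _ wt_cont (4 * π) fun y hy => wt_le y hy
  have hs : dySet jK kK ×ˢ ySet jK ⊆ Set.Ico (0:ℝ) 1 ×ˢ Set.Ioi (0:ℝ) :=
    Set.prod_mono (dySet_sub jK kK hK) (ySet_pos jK)
  have hQ : MeasurableSet (dySet jK kK ×ˢ ySet jK) := measurableSet_Ico.prod (ySet_meas jK)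
  rw [muO_eq] at i1 ⊢
  rw [Measure.restrict_restrict hQ, Set.inter_eq_left.mpr hs, Measure.volume_eq_prod,
    setIntegral_prod]
  have : IntegrableOn (gg ψ q r wt) (Set.Ico (0:ℝ) 1 ×ˢ Set.Ioi (0:ℝ)) volume := i1
  exact this.mono_set hs

/-- indices of subintervals -/
def SS (jK kK : ℕ) : Set (ℕ × ℕ) := {p | p.2 < 2 ^ p.1 ∧ dySet p.1 p.2 ⊆ dySet jK kK}
/-- the other indices -/
def TT (jK kK : ℕ) : Set (ℕ × ℕ) := {p | p.2 < 2 ^ p.1 ∧ ¬ dySet p.1 p.2 ⊆ dySet jK kK}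

/-- restricted majorant -/
def rA (ψ : SchwartzMap ℝ ℂ) (A : Set (ℕ × ℕ)) (z : ℝ × ℝ) (p : ℕ × ℕ) : ENNReal :=
  A.indicator (fun p => aI ψ p z.1 z.2) p

lemma rA_meas (ψ : SchwartzMap ℝ ℂ) (A : Set (ℕ × ℕ)) (p : ℕ × ℕ) : Measurable (fun z => rA ψ A z p) := by
  unfold rA
  by_cases h : p ∈ A
  · simp only [Set.indicator_of_mem h]; exact aI_meas ψ p
  · simp only [Set.indicator_of_notMem h]; exact measurable_const

/-- Bound for one pair -/
def bnd (ψ : SchwartzMap ℝ ℂ) (jK kK : ℕ) (Q : Set (ℝ × ℝ)) (q : (ℕ × ℕ) × ℕ × ℕ) (z : ℝ × ℝ) : ENNReal :=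
  rA ψ (SS jK kK) z q.1 * rA ψ (SS jK kK) z q.2 * W1 Q z +
  (rA ψ (TT jK kK) z q.1 * (rA ψ (SS jK kK) z q.2 + rA ψ (TT jK kK) z q.2) +
    (rA ψ (SS jK kK) z q.1 + rA ψ (TT jK kK) z q.1) * rA ψ (TT jK kK) z q.2) * W3 Q z

lemma bnd_meas (ψ : SchwartzMap ℝ ℂ) (jK kK : ℕ) (Q : Set (ℝ × ℝ)) (hQ : MeasurableSet Q) (q : (ℕ × ℕ) × ℕ × ℕ) :
    Measurable (bnd ψ jK kK Q q) := by
  have a1 := rA_meas ψ (SS jK kK) q.1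
  have a2 := rA_meas ψ (SS jK kK) q.2
  have a3 := rA_meas ψ (TT jK kK) q.1
  have a4 := rA_meas ψ (TT jK kK) q.2
  exact ((a1.mul a2).mul (W1_meas Q hQ)).add (((a3.mul (a2.add a4)).add ((a1.add a3).mul a4)).mul (W3_meas Q hQ))

lemma term_bnd (ψ : SchwartzMap ℝ ℂ) (hsupp : Function.support (𝓕 ⇑ψ) ⊆ Sset)
    (horth : ∀ j k j' k' : ℤ,
      (∫ x : ℝ, psiI ψ j k x * (starRingEnd ℂ) (psiI ψ j' k' x)) =
        if j = j' ∧ k = k' then 1 else 0) (jK kK : ℕ) (q : (ℕ × ℕ) × ℕ × ℕ)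
    (h1 : q.1.2 < 2 ^ q.1.1) (h2 : q.2.2 < 2 ^ q.2.1)
    (h3 : ¬(q.1 = q.2 ∧ dySet q.1.1 q.1.2 ⊆ dySet jK kK)) (Q : Set (ℝ × ℝ)) (hQ : MeasurableSet Q) :
    ‖∫ p in Q, gg ψ q.1 q.2 wt p ∂muO‖ₑ ≤ ∫⁻ z, bnd ψ jK kK Q q z ∂muO := by
  obtain ⟨q, r⟩ := q
  simp only at h1 h2 h3 ⊢
  by_cases hq : dySet q.1 q.2 ⊆ dySet jK kK <;> by_cases hr : dySet r.1 r.2 ⊆ dySet jK kK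
  · refine (term1 ψ hsupp horth q r h1 h2 (fun h => h3 ⟨h, hq⟩) Q hQ).trans (lintegral_mono fun z => ?_)
    have m1 : q ∈ SS jK kK := ⟨h1, hq⟩
    have m2 : r ∈ SS jK kK := ⟨h2, hr⟩
    simp only [bnd, rA, Set.indicator_of_mem m1, Set.indicator_of_mem m2]
    exact le_self_add
  · refine (term3 ψ q r Q hQ).trans (lintegral_mono fun z => ?_)
    have m1 : q ∈ SS jK kK := ⟨h1, hq⟩
    have m2 : r ∈ TT jK kK := ⟨h2, hr⟩
    simp only [bnd, rA, Set.indicator_of_mem m1, Set.indicator_of_mem m2]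
    refine le_trans ?_ le_add_self
    gcongr
    refine le_trans ?_ le_add_self
    gcongr
    exact le_self_add
  · refine (term3 ψ q r Q hQ).trans (lintegral_mono fun z => ?_)
    have m1 : q ∈ TT jK kK := ⟨h1, hq⟩
    have m2 : r ∈ SS jK kK := ⟨h2, hr⟩
    simp only [bnd, rA, Set.indicator_of_mem m1, Set.indicator_of_mem m2]
    refine le_trans ?_ le_add_self
    gcongr
    refine le_trans ?_ le_self_add
    gcongr
    exact le_self_add
  · refine (term3 ψ q r Q hQ).trans (lintegral_mono fun z => ?_)
    have m1 : q ∈ TT jK kK := ⟨h1, hq⟩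
    have m2 : r ∈ TT jK kK := ⟨h2, hr⟩
    simp only [bnd, rA, Set.indicator_of_mem m1, Set.indicator_of_mem m2]
    refine le_trans ?_ le_add_self
    gcongr
    refine le_trans ?_ le_self_add
    gcongr
    exact le_add_self

/-- total over a family -/
def sA (ψ : SchwartzMap ℝ ℂ) (A : Set (ℕ × ℕ)) (z : ℝ × ℝ) : ENNReal := ∑' p, rA ψ A z p

lemma tsum_pair (f g : ℕ × ℕ → ENNReal) : ∑' q : (ℕ × ℕ) × ℕ × ℕ, f q.1 * g q.2 = (∑' p, f p) * ∑' p, g p := by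
  rw [ENNReal.tsum_prod' (f := fun q : (ℕ × ℕ) × ℕ × ℕ => f q.1 * g q.2)]
  simp only [ENNReal.tsum_mul_left, ENNReal.tsum_mul_right]

lemma bnd_tsum (ψ : SchwartzMap ℝ ℂ) (jK kK : ℕ) (Q : Set (ℝ × ℝ)) (z : ℝ × ℝ) :
    ∑' q, bnd ψ jK kK Q q z = sA ψ (SS jK kK) z * sA ψ (SS jK kK) z * W1 Q z +
      (sA ψ (TT jK kK) z * (sA ψ (SS jK kK) z + sA ψ (TT jK kK) z) +
       (sA ψ (SS jK kK) z + sA ψ (TT jK kK) z) * sA ψ (TT jK kK) z) * W3 Q z := by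
  unfold bnd
  rw [ENNReal.tsum_add, ENNReal.tsum_mul_right, ENNReal.tsum_mul_right, ENNReal.tsum_add, tsum_pair,
    tsum_pair (rA ψ (TT jK kK) z) (fun p => rA ψ (SS jK kK) z p + rA ψ (TT jK kK) z p),
    tsum_pair (fun p => rA ψ (SS jK kK) z p + rA ψ (TT jK kK) z p) (rA ψ (TT jK kK) z), ENNReal.tsum_add]
  rfl

/-- Conclusion of tot_sum. -/
def TotHyp (ψ : SchwartzMap ℝ ℂ) (C : ℝ) : Prop :=
  ∀ (j0 : ℕ) (x y R : ℝ) (A : Set (ℕ × ℕ)), 0 ≤ y → 0 < R →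
      (∀ p ∈ A, p.2 < 2 ^ p.1 ∧ j0 ≤ p.1 ∧
        ∀ m : ℤ, R ≤ 2 * (len p.1 + |x - m - ctr p.1 p.2| + y)) →
      ∑' p : ℕ × ℕ, A.indicator (fun p => aI ψ p x y) p ≤
        ENNReal.ofReal (C * (len j0 / (R * (len j0 + R))))

lemma S_bound (ψ : SchwartzMap ℝ ℂ) (C : ℝ) (hT : TotHyp ψ C) (jK kK : ℕ) (z : ℝ × ℝ) (hy : 0 < z.2) :
    sA ψ (SS jK kK) z ≤ ENNReal.ofReal (C * (len jK / (z.2 * (len jK + z.2)))) := by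
  refine hT jK z.1 z.2 z.2 (SS jK kK) hy.le hy fun p hp => ⟨hp.1, (geom1 _ _ _ _ hp.2).1, fun m => ?_⟩
  have := len_pos p.1
  have := abs_nonneg (z.1 - m - ctr p.1 p.2)
  linarith

/-- short form of DD -/
def Dz (jK kK : ℕ) (x : ℝ) : ℝ := DD ((kK : ℝ) * len jK) (((kK : ℝ) + 1) * len jK) x

lemma K_ends (jK kK : ℕ) (hK : kK < 2 ^ jK) : 0 ≤ (kK : ℝ) * len jK ∧ ((kK : ℝ) + 1) * len jK ≤ 1 ∧
    (kK : ℝ) * len jK ≤ ((kK : ℝ) + 1) * len jK := by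
  have hl := len_pos jK
  refine ⟨by positivity, ?_, by nlinarith⟩
  have : ((kK : ℝ) + 1) ≤ 2 ^ jK := by exact_mod_cast hK
  rw [len_nat, mul_one_div, div_le_one (by positivity)]
  exact this

lemma S_bound' (ψ : SchwartzMap ℝ ℂ) (C : ℝ) (hT : TotHyp ψ C) (jK kK : ℕ) (hK : kK < 2 ^ jK) (z : ℝ × ℝ) (hy : 0 < z.2)
    (hx : z.1 ∈ Set.Ico (0:ℝ) 1) (hxK : z.1 ∉ dySet jK kK) (hD : 0 < Dz jK kK z.1) :
    sA ψ (SS jK kK) z ≤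
      ENNReal.ofReal (C * (len jK / ((z.2 + Dz jK kK z.1) * (len jK + (z.2 + Dz jK kK z.1))))) := by
  obtain ⟨k1, k2, k3⟩ := K_ends jK kK hK
  refine hT jK z.1 z.2 _ (SS jK kK) hy.le (by positivity) fun p hp => ⟨hp.1, (geom1 _ _ _ _ hp.2).1, fun m => ?_⟩
  have := len_pos p.1
  have h := dist_S _ _ z.1 (ctr p.1 p.2) k1 k2 k3 hx hxK (geom1 _ _ _ _ hp.2).2 m
  change Dz jK kK z.1 ≤ _ at h
  linarith

lemma D_le (jK kK : ℕ) (x : ℝ) (hx : x ∈ dySet jK kK) : Dz jK kK x ≤ len jK := by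
  have h1 : Dz jK kK x ≤ |x - (kK : ℝ) * len jK| := (min_le_left _ _).trans (min_le_left _ _)
  have h2 := hx.1
  have h3 := hx.2
  rw [abs_of_nonneg (by linarith)] at h1
  linarith

lemma T_bound (ψ : SchwartzMap ℝ ℂ) (C : ℝ) (hC : 0 < C) (hT : TotHyp ψ C) (jK kK : ℕ) (hK : kK < 2 ^ jK) (z : ℝ × ℝ)
    (hy : 0 < z.2) (hxK : z.1 ∈ dySet jK kK) (hD : 0 < Dz jK kK z.1) :
    sA ψ (TT jK kK) z ≤ ENNReal.ofReal (C / (z.2 + Dz jK kK z.1)) := by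
  obtain ⟨k1, k2, k3⟩ := K_ends jK kK hK
  have hDl := D_le jK kK z.1 hxK
  refine (hT 0 z.1 z.2 (z.2 + Dz jK kK z.1) (TT jK kK) hy.le (by positivity)
    fun p hp => ⟨hp.1, Nat.zero_le _, fun m => ?_⟩).trans ?_
  · have hl := len_pos p.1
    have ha := abs_nonneg (z.1 - m - ctr p.1 p.2)
    rcases lt_or_ge p.1 jK with h | h
    · have : len jK ≤ len p.1 := by
        rw [len_nat, len_nat]
        apply one_div_le_one_div_of_le (by positivity)
        exact pow_le_pow_right₀ (by norm_num) h.le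
      linarith
    · have hc : ctr p.1 p.2 ∉ dySet jK kK := fun hc => hp.2 (geom2 _ _ _ _ h hc)
      have hc0 := dySet_sub p.1 p.2 hp.1 (ctr_mem p.1 p.2)
      have h := dist_T _ _ z.1 (ctr p.1 p.2) k1 k2 k3 hxK hc0 hc m
      change Dz jK kK z.1 ≤ _ at h
      linarith
  · apply ENNReal.ofReal_le_ofReal
    have e : len ((0 : ℕ) : ℤ) = 1 := by rw [len_nat]; norm_num
    rw [e, mul_one_div]
    gcongr
    nlinarith

lemma T_zero (ψ : SchwartzMap ℝ ℂ) (kK : ℕ) (hK : kK < 2 ^ 0) (z : ℝ × ℝ) : sA ψ (TT 0 kK) z = 0 := by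
  have hk : kK = 0 := by simpa using hK
  subst hk
  have e : dySet 0 0 = Set.Ico (0:ℝ) 1 := by
    have e : len ((0 : ℕ) : ℤ) = 1 := by rw [len_nat]; norm_num
    unfold dySet; rw [e]; norm_num
  have : TT 0 0 = ∅ := by
    ext p
    simp only [TT, e, Set.mem_setOf_eq, Set.mem_empty_iff_false, iff_false]
    rintro ⟨h1, h2⟩
    exact h2 (dySet_sub _ _ h1)
  simp [sA, rA, this]

/-- integrand of the total bound -/
def totI (ψ : SchwartzMap ℝ ℂ) (jK kK : ℕ) (z : ℝ × ℝ) : ENNReal :=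
  sA ψ (SS jK kK) z * sA ψ (SS jK kK) z * W1 (dySet jK kK ×ˢ ySet jK) z +
      (sA ψ (TT jK kK) z * (sA ψ (SS jK kK) z + sA ψ (TT jK kK) z) +
       (sA ψ (SS jK kK) z + sA ψ (TT jK kK) z) * sA ψ (TT jK kK) z) * W3 (dySet jK kK ×ˢ ySet jK) z

lemma mul3_le (S W : ENNReal) (s w : ℝ) (hs : 0 ≤ s) (h1 : S ≤ ENNReal.ofReal s) (h2 : W ≤ ENNReal.ofReal w) :
    S * S * W ≤ ENNReal.ofReal (s * s * w) := by
  rw [ENNReal.ofReal_mul (by positivity), ENNReal.ofReal_mul hs]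
  gcongr

lemma pointwise (ψ : SchwartzMap ℝ ℂ) (C : ℝ) (hC : 0 < C) (hT : TotHyp ψ C) (jK kK : ℕ) (hK : kK < 2 ^ jK) (z : ℝ × ℝ)
    (hy : 0 < z.2) (hx : z.1 ∈ Set.Ico (0:ℝ) 1) (hD : 0 < Dz jK kK z.1) :
    totI ψ jK kK z ≤ (dySet jK kK).indicator (fun _ => 1) z.1 *
        ENNReal.ofReal (24 * π ^ 2 * C ^ 2 * (len jK / (len jK + z.2) ^ 2)) +
      ENNReal.ofReal (64 * π * C ^ 2 * (len jK * (kap (len jK) (Dz jK kK z.1) * kap (len jK) z.2))) := by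
  have hL := len_pos jK
  have hL1 := len_le_one jK
  have hp := Real.pi_pos
  have hS := S_bound ψ C hT jK kK z hy
  unfold totI
  by_cases hxK : z.1 ∈ dySet jK kK
  · rw [Set.indicator_of_mem hxK, one_mul]
    by_cases hyY : z.2 ∈ ySet jK
    · have hQ : z ∈ dySet jK kK ×ˢ ySet jK := ⟨hxK, hyY⟩
      have hQ' : z ∉ (dySet jK kK ×ˢ ySet jK)ᶜ := fun h => h hQ
      have e1 : W1 (dySet jK kK ×ˢ ySet jK) z = ENNReal.ofReal (24 * π ^ 2 * z.2 ^ 2) := by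
        simp only [W1, Set.indicator_of_mem hQ, Set.indicator_of_notMem hQ', add_zero]
      have e3 : W3 (dySet jK kK ×ˢ ySet jK) z = ENNReal.ofReal (4 * π * z.2) := by
        simp only [W3, Set.indicator_of_mem hQ]
      rw [e1, e3]
      apply add_le_add
      · refine (mul3_le _ _ _ _ (by positivity) hS le_rfl).trans (ENNReal.ofReal_le_ofReal (r1 C _ _ hL hL1 hy))
      · by_cases hj : jK = 0
        · subst hj
          simp [T_zero ψ kK hK z]
        · have hTb := T_bound ψ C hC hT jK kK hK z hy hxK hD
          have hDl := D_le jK kK z.1 hxK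
          have hS' : sA ψ (SS jK kK) z ≤ ENNReal.ofReal (C / z.2) := by
            refine hS.trans (ENNReal.ofReal_le_ofReal ?_)
            have : C * (len jK / (z.2 * (len jK + z.2))) = C / z.2 * (len jK / (len jK + z.2)) := by field_simp
            rw [this]
            apply mul_le_of_le_one_right (by positivity)
            rw [div_le_one (by positivity)]; linarith
          refine le_trans ?_ (ENNReal.ofReal_le_ofReal (r2 C _ z.2 _ hC hL hy hD (ySet_bdd jK hj _ hyY) hDl))
          have p1 : 0 ≤ C / z.2 := by positivity
          have p2 : 0 ≤ C / (z.2 + Dz jK kK z.1) := by positivity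
          rw [ENNReal.ofReal_mul (q := 4 * π * z.2) (by positivity), ENNReal.ofReal_add (by positivity) (by positivity),
            ENNReal.ofReal_mul p2, ENNReal.ofReal_mul (q := C / (z.2 + Dz jK kK z.1)) (by positivity), ENNReal.ofReal_add p1 p2]
          gcongr
    · have hQ : z ∉ dySet jK kK ×ˢ ySet jK := fun h => hyY h.2
      have hQ' : z ∈ (dySet jK kK ×ˢ ySet jK)ᶜ := hQ
      have e1 : W1 (dySet jK kK ×ˢ ySet jK) z = ENNReal.ofReal (4 * π * z.2) := by
        simp only [W1, Set.indicator_of_notMem hQ, Set.indicator_of_mem hQ', zero_add]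
      have e3 : W3 (dySet jK kK ×ˢ ySet jK) z = 0 := by
        simp only [W3, Set.indicator_of_notMem hQ]
      rw [e1, e3, mul_zero, add_zero]
      refine le_trans ?_ le_self_add
      exact (mul3_le _ _ _ _ (by positivity) hS le_rfl).trans
        (ENNReal.ofReal_le_ofReal (r4 C _ _ hL hy (ySet_compl jK _ hy hyY)))
  · have hQ : z ∉ dySet jK kK ×ˢ ySet jK := fun h => hxK h.1
    have hQ' : z ∈ (dySet jK kK ×ˢ ySet jK)ᶜ := hQ
    have e1 : W1 (dySet jK kK ×ˢ ySet jK) z = ENNReal.ofReal (4 * π * z.2) := by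
      simp only [W1, Set.indicator_of_notMem hQ, Set.indicator_of_mem hQ', zero_add]
    have e3 : W3 (dySet jK kK ×ˢ ySet jK) z = 0 := by
      simp only [W3, Set.indicator_of_notMem hQ]
    rw [e1, e3, mul_zero, add_zero]
    refine le_trans ?_ le_add_self
    have hS' := S_bound' ψ C hT jK kK hK z hy hx hxK hD
    exact (mul3_le _ _ _ _ (by positivity) hS' le_rfl).trans
        (ENNReal.ofReal_le_ofReal (r3 C _ _ _ hC hL hy hD))

/-- sum of profiles at the four endpoints -/
def VV (L a b x : ℝ) : ENNReal := ENNReal.ofReal (kap L |x - a|) + ENNReal.ofReal (kap L |x - b|) +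
  (ENNReal.ofReal (kap L |x - (a + 1)|) + ENNReal.ofReal (kap L |x - (b - 1)|))

lemma kapD_le (L a b x : ℝ) : ENNReal.ofReal (kap L (DD a b x)) ≤ VV L a b x := by
  unfold VV DD
  rcases min_choice (min |x - a| |x - b|) (min |x - (a + 1)| |x - (b - 1)|) with h | h <;> rw [h]
  · refine le_trans ?_ le_self_add
    rcases min_choice |x - a| |x - b| with h | h <;> rw [h]
    · exact le_self_add
    · exact le_add_self
  · refine le_trans ?_ le_add_self
    rcases min_choice |x - (a + 1)| |x - (b - 1)| with h | h <;> rw [h]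
    · exact le_self_add
    · exact le_add_self

lemma kap_meas (L a : ℝ) : Measurable (fun x : ℝ => ENNReal.ofReal (kap L |x - a|)) := by
  unfold kap; fun_prop

lemma VV_meas (L a b : ℝ) : Measurable (VV L a b) := by
  unfold VV
  exact ((kap_meas L a).add (kap_meas L b)).add ((kap_meas L (a + 1)).add (kap_meas L (b - 1)))

lemma D_ae (a b : ℝ) : ∀ᵐ p ∂muO, 0 < DD a b p.1 := by
  have h : ∀ᵐ x : ℝ, 0 < DD a b x := by
    have hc : ({a, b, a + 1, b - 1} : Set ℝ).Countable := (Set.toFinite _).countable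
    filter_upwards [hc.ae_notMem volume] with x hx
    simp only [Set.mem_insert_iff, Set.mem_singleton_iff, not_or] at hx
    obtain ⟨h1, h2, h3, h4⟩ := hx
    unfold DD
    simp only [lt_min_iff, abs_pos, sub_ne_zero]
    exact ⟨⟨h1, h2⟩, h3, h4⟩
  have h' := ae_restrict_of_ae (s := Set.Ico (0:ℝ) 1) h
  exact (Measure.quasiMeasurePreserving_fst (μ := volume.restrict (Set.Ico (0:ℝ) 1))
    (ν := volume.restrict (Set.Ioi (0:ℝ)))).ae h'

lemma muO_le' : muO ≤ (volume : Measure ℝ).prod (volume : Measure ℝ) := by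
  rw [muO_eq]
  exact Measure.restrict_le_self

lemma tot_lint (ψ : SchwartzMap ℝ ℂ) (C : ℝ) (hC : 0 < C) (hT : TotHyp ψ C) :
    ∃ C' : ℝ, 0 < C' ∧ ∀ jK kK : ℕ, kK < 2 ^ jK → ∫⁻ z, totI ψ jK kK z ∂muO ≤ ENNReal.ofReal (C' * len jK) := by
  obtain ⟨c1, hc1, h1⟩ := kap_lint
  obtain ⟨c2, hc2, h2⟩ := quad_lint
  have hp := Real.pi_pos
  refine ⟨24 * π ^ 2 * C ^ 2 * c2 + 64 * π * C ^ 2 * (4 * c1 * c1) + 1, by positivity, fun jK kK hK => ?_⟩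
  have hL := len_pos jK
  set a := (kK : ℝ) * len jK with ha
  set b := ((kK : ℝ) + 1) * len jK with hb
  have hV : ∫⁻ x, VV (len jK) a b x = ENNReal.ofReal (4 * c1) := by
    unfold VV
    rw [lintegral_add_left (f := fun x => ENNReal.ofReal (kap (len jK) |x - a|) + ENNReal.ofReal (kap (len jK) |x - b|))
      ((kap_meas _ a).add (kap_meas _ b)), lintegral_add_left (kap_meas _ a),
      lintegral_add_left (kap_meas _ (a + 1)), h1 _ _ hL, h1 _ _ hL, h1 _ _ hL, h1 _ _ hL,
      ← ENNReal.ofReal_add hc1 hc1, ← ENNReal.ofReal_add (by positivity) (by positivity)]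
    congr 1; ring
  have hk : ∫⁻ y, ENNReal.ofReal (kap (len jK) |y|) = ENNReal.ofReal c1 := by
    have := h1 (len jK) 0 hL
    simpa using this
  have hKv : ∫⁻ x, (dySet jK kK).indicator (fun _ => (1 : ENNReal)) x = ENNReal.ofReal (len jK) := by
    rw [lintegral_indicator (by exact measurableSet_Ico)]
    simp only [lintegral_const, Measure.restrict_apply_univ, one_mul, dySet, Real.volume_Ico]
    congr 1; ring
  have m1 : Measurable (fun x => (dySet jK kK).indicator (fun _ => (1 : ENNReal)) x) :=
    measurable_const.indicator measurableSet_Ico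
  have m2 : Measurable (fun y : ℝ => ENNReal.ofReal (len jK / (len jK + |y|) ^ 2)) := by fun_prop
  have m3 : Measurable (fun y : ℝ => ENNReal.ofReal (kap (len jK) |y|)) := by unfold kap; fun_prop
  calc ∫⁻ z, totI ψ jK kK z ∂muO
      ≤ ∫⁻ z, (ENNReal.ofReal (24 * π ^ 2 * C ^ 2) * ((dySet jK kK).indicator (fun _ => 1) z.1 *
        ENNReal.ofReal (len jK / (len jK + |z.2|) ^ 2)) +
      ENNReal.ofReal (64 * π * C ^ 2 * len jK) * (VV (len jK) a b z.1 * ENNReal.ofReal (kap (len jK) |z.2|))) ∂muO := by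
        apply lintegral_mono_ae
        filter_upwards [muO_ae, D_ae a b] with z hz hD
        refine (pointwise ψ C hC hT jK kK hK z hz.2 hz.1 hD).trans ?_
        rw [abs_of_pos hz.2]
        apply add_le_add
        · rw [ENNReal.ofReal_mul (by positivity)]
          apply le_of_eq; ring
        · rw [← mul_assoc (64 * π * C ^ 2), ENNReal.ofReal_mul (by positivity),
            ENNReal.ofReal_mul (p := kap (len jK) (Dz jK kK z.1)) (kap_nonneg _ _ hL hD.le)]
          gcongr
          exact kapD_le _ _ _ _
    _ ≤ ∫⁻ z, (ENNReal.ofReal (24 * π ^ 2 * C ^ 2) * ((dySet jK kK).indicator (fun _ => 1) z.1 *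
        ENNReal.ofReal (len jK / (len jK + |z.2|) ^ 2)) +
      ENNReal.ofReal (64 * π * C ^ 2 * len jK) * (VV (len jK) a b z.1 * ENNReal.ofReal (kap (len jK) |z.2|)))
        ∂((volume : Measure ℝ).prod (volume : Measure ℝ)) := lintegral_mono' muO_le' le_rfl
    _ = ENNReal.ofReal (24 * π ^ 2 * C ^ 2) * (ENNReal.ofReal (len jK) * ENNReal.ofReal c2) +
        ENNReal.ofReal (64 * π * C ^ 2 * len jK) * (ENNReal.ofReal (4 * c1) * ENNReal.ofReal c1) := by
        rw [lintegral_add_left, lintegral_const_mul, lintegral_const_mul,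
          lintegral_prod_mul (f := fun x => (dySet jK kK).indicator (fun _ => (1 : ENNReal)) x)
            (g := fun y : ℝ => ENNReal.ofReal (len jK / (len jK + |y|) ^ 2)) m1.aemeasurable m2.aemeasurable,
          lintegral_prod_mul (f := VV (len jK) a b)
            (g := fun y : ℝ => ENNReal.ofReal (kap (len jK) |y|)) (VV_meas _ a b).aemeasurable m3.aemeasurable,
          hKv, h2 _ hL, hV, hk]
        · exact ((VV_meas _ a b).comp measurable_fst).mul (m3.comp measurable_snd)
        · exact (m1.comp measurable_fst).mul (m2.comp measurable_snd)
        · exact ((m1.comp measurable_fst).mul (m2.comp measurable_snd)).const_mul _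
    _ = ENNReal.ofReal ((24 * π ^ 2 * C ^ 2 * c2 + 64 * π * C ^ 2 * (4 * c1 * c1)) * len jK) := by
        rw [← ENNReal.ofReal_mul (by positivity), ← ENNReal.ofReal_mul (by positivity),
          ← ENNReal.ofReal_mul (by positivity), ← ENNReal.ofReal_mul (by positivity),
          ← ENNReal.ofReal_add (by positivity) (by positivity)]
        congr 1; ring
    _ ≤ _ := by
        apply ENNReal.ofReal_le_ofReal
        apply mul_le_mul_of_nonneg_right _ hL.le
        linarith

theorem main_enorm (ψ : SchwartzMap ℝ ℂ) (hsupp : Function.support (𝓕 ⇑ψ) ⊆ Sset)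
    (horth : ∀ j k j' k' : ℤ,
      (∫ x : ℝ, psiI ψ j k x * (starRingEnd ℂ) (psiI ψ j' k' x)) =
        if j = j' ∧ k = k' then 1 else 0) :
    ∃ C : ℝ, 0 < C ∧ ∀ jK kK : ℕ, kK < 2 ^ jK →
      ∑' q : pairIdx jK kK, ‖∫ x in dySet jK kK, ∫ y in ySet jK, gg ψ q.1.1 q.1.2 wt (x, y)‖ₑ
        ≤ ENNReal.ofReal (C * len (jK : ℤ)) := by
  obtain ⟨C, hC, hT⟩ := tot_sum ψ hsupp
  obtain ⟨C', hC', h⟩ := tot_lint ψ C hC hT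
  refine ⟨C', hC', fun jK kK hK => ?_⟩
  have hQ : MeasurableSet (dySet jK kK ×ˢ ySet jK) := measurableSet_Ico.prod (ySet_meas jK)
  calc _ ≤ ∑' q : pairIdx jK kK, ∫⁻ z, bnd ψ jK kK (dySet jK kK ×ˢ ySet jK) q.1 z ∂muO := by
        apply ENNReal.tsum_le_tsum
        intro q
        rw [term_eq ψ hsupp _ _ q.2.1 q.2.2.1 jK kK hK]
        exact term_bnd ψ hsupp horth jK kK q.1 q.2.1 q.2.2.1 q.2.2.2 _ hQ
    _ ≤ ∑' q, ∫⁻ z, bnd ψ jK kK (dySet jK kK ×ˢ ySet jK) q z ∂muO :=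
        ENNReal.tsum_comp_le_tsum_of_injective Subtype.val_injective _
    _ = ∫⁻ z, totI ψ jK kK z ∂muO := by
        rw [← lintegral_tsum fun q => (bnd_meas ψ jK kK _ hQ q).aemeasurable]
        congr 1; ext z
        exact bnd_tsum ψ jK kK _ z
    _ ≤ _ := h jK kK hK

/-- There is a constant `C > 0`, depending only on `ψ`, such that for every dyadic
`K ⊆ [0,1)`, the sum of `|∫_{Q̃_K} G_I \bar{G_J} (1-e^{-4πy}) e^{-2πy} dx dy|` over all ordered
pairs `(I,J)` of dyadic subintervals of `[0,1)` — except the pairs with `I = J ⊆ K` —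
converges and is at most `C|K|`. -/
theorem stmt_7 (ψ : SchwartzMap ℝ ℂ)
    (hsupp : Function.support (𝓕 ⇑ψ) ⊆
      Set.Icc (-(4 / 3) : ℝ) (-(1 / 3)) ∪ Set.Icc (1 / 3) (4 / 3))
    (horth : ∀ j k j' k' : ℤ,
      (∫ x : ℝ, psiI ψ j k x * (starRingEnd ℂ) (psiI ψ j' k' x)) =
        if j = j' ∧ k = k' then 1 else 0) :
    ∃ C : ℝ, 0 < C ∧ ∀ jK kK : ℕ, kK < 2 ^ jK →
      Summable (fun q : pairIdx jK kK =>
        ‖∫ x in dySet jK kK, ∫ y in ySet jK,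
            GI ψ (q.1.1.1 : ℤ) (q.1.1.2 : ℤ) x y *
              (starRingEnd ℂ) (GI ψ (q.1.2.1 : ℤ) (q.1.2.2 : ℤ) x y) *
              (((1 - Real.exp (-(4 * π * y))) * Real.exp (-(2 * π * y)) : ℝ) : ℂ)‖) ∧
      (∑' q : pairIdx jK kK,
        ‖∫ x in dySet jK kK, ∫ y in ySet jK,
            GI ψ (q.1.1.1 : ℤ) (q.1.1.2 : ℤ) x y *
              (starRingEnd ℂ) (GI ψ (q.1.2.1 : ℤ) (q.1.2.2 : ℤ) x y) *
              (((1 - Real.exp (-(4 * π * y))) * Real.exp (-(2 * π * y)) : ℝ) : ℂ)‖)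
        ≤ C * len (jK : ℤ) := by
  obtain ⟨C, hC, h⟩ := main_enorm ψ hsupp horth
  refine ⟨C, hC, fun jK kK hK => ?_⟩
  have h0 := h jK kK hK
  have hfin := ne_top_of_le_ne_top ENNReal.ofReal_ne_top h0
  have hs := ENNReal.summable_toReal hfin
  have ht := ENNReal.tsum_toReal_eq (fun q : pairIdx jK kK => ENNReal.ne_top_of_tsum_ne_top hfin q)
  simp only [toReal_enorm] at hs ht
  refine ⟨hs, ?_⟩
  have h1 := ENNReal.toReal_mono ENNReal.ofReal_ne_top h0
  rw [ht, ENNReal.toReal_ofReal (mul_nonneg hC.le (len_pos _).le)] at h1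
  exact h1
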